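/- Let N ≥ 1 and p, q ≥ 1 be integers and set n = p + q. Let ψ_1, …, ψ_n and φ_1, …, φ_n be complex numbers such that Re φ_j < 0 for 1 ≤ j ≤ p, Re φ_l > 0 for p+1 ≤ l ≤ n, and such that e^{iψ_1}, …, e^{iψ_n} are pairwise distinct. Set λ_N = N·∑_{l=p+1}^{n} (iψ_l − φ_l). Then ∫_{U(N)} e^{λ_N} · ∏_{j=1}^{p} det(1_N − e^{iψ_j} u)/det(1_N − e^{φ_j} u) · ∏_{l=p+1}^{n} det(1_N − e^{−iψ_l} ū)/det(1_N − e^{−φ_l} ū) du = (1/(p!·q!)) · ∑_{w ∈ S_n} ∏_{l=p+1}^{n} e^{N(iψ_{w(l)} − φ_l)} · ∏_{j=1}^{p} [(1 − e^{φ_j − iψ_{w(l)}})(1 − e^{iψ_{w(j)} − φ_l})] / [(1 − e^{iψ_{w(j)} − iψ_{w(l)}})(1 − e^{φ_j − φ_l})]. -/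

import Mathlib

open MeasureTheory Matrix

noncomputable instance (N : ℕ) : MeasurableSpace (Matrix.unitaryGroup (Fin N) ℂ) := borel _
instance (N : ℕ) : BorelSpace (Matrix.unitaryGroup (Fin N) ℂ) := ⟨rfl⟩


namespace ACR

theorem det_rows_aux {R : Type*} [CommRing R] {n : Type*} [Fintype n] [DecidableEq n]
    (A : Matrix n n R) (v w : n → R) (S : Finset n) :
    det (Matrix.of fun i j => A i j + if i ∈ S then v i * w j else 0) =
      det A + ∑ i ∈ S, v i * det (A.updateRow i w) := by
  induction S using Finset.induction_on with
  | empty => simp; rfl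
  | insert a S ha ih =>
    rw [Finset.sum_insert ha]
    set B : Matrix n n R := Matrix.of fun i j => A i j + if i ∈ S then v i * w j else 0 with hB
    have h1 : (Matrix.of fun i j => A i j + if i ∈ insert a S then v i * w j else 0)
        = B.updateRow a (A a + v a • w) := by
      ext i j
      by_cases hi : i = a
      · subst hi; simp [Matrix.updateRow_self]
      · simp [hi, hB, Matrix.updateRow_ne hi]
    have h2 : B.updateRow a (A a) = B := by
      ext i j
      by_cases hi : i = a
      · subst hi; simp [hB, ha]
      · simp [Matrix.updateRow_ne hi]
    have h3 : det (B.updateRow a w) = det (A.updateRow a w) := by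
      refine det_eq_of_forall_row_eq_smul_add_const (fun i => if i ∈ S then v i else 0) a
        (by simp [ha]) ?_
      intro i j
      by_cases hi : i = a
      · subst hi; simp [ha]
      · simp only [Matrix.updateRow_ne hi, Matrix.updateRow_self, hB, Matrix.of_apply]
        split_ifs <;> simp
    rw [h1, det_updateRow_add, det_updateRow_smul, h2, h3, ih]
    ring

theorem det_add_vecMulVec' {R : Type*} [CommRing R] {n : Type*} [Fintype n] [DecidableEq n]
    (A : Matrix n n R) (v w : n → R) :
    det (A + vecMulVec v w) = det A + w ⬝ᵥ (adjugate A *ᵥ v) := by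
  have h := det_rows_aux A v w Finset.univ
  have h0 : (Matrix.of fun i j => A i j + if i ∈ (Finset.univ : Finset n) then v i * w j else 0)
      = A + vecMulVec v w := by
    ext i j; simp [vecMulVec_apply]
  rw [h0] at h
  rw [h]; congr 1
  rw [Matrix.dotProduct_mulVec]
  simp only [dotProduct]
  refine Finset.sum_congr rfl fun i _ => ?_
  rw [mul_comm]; congr 1
  rw [← cramer_transpose_apply, ← mulVec_transpose, adjugate_transpose, ← cramer_eq_adjugate_mulVec]

theorem derivative_charpoly' {R : Type*} [CommRing R] {n : Type*} [Fintype n] [DecidableEq n]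
    (U : Matrix n n R) :
    Polynomial.derivative U.charpoly = (adjugate (charmatrix U)).trace := by
  unfold Matrix.charpoly
  rw [det_apply]
  simp only [Polynomial.derivative_sum, trace, diag_apply, adjugate_apply, det_apply]
  rw [Finset.sum_comm]
  refine Finset.sum_congr rfl fun σ _ => ?_
  rw [← Finset.smul_sum]
  rw [Polynomial.derivative_smul]
  congr 1
  rw [Polynomial.derivative_prod_finset]
  conv_rhs => rw [← Equiv.sum_comp σ]
  refine Finset.sum_congr rfl fun i _ => ?_
  rw [← Finset.mul_prod_erase Finset.univ _ (Finset.mem_univ i)]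
  rw [Matrix.updateRow_self, mul_comm]
  congr 1
  · by_cases hi : σ i = i
    · rw [hi]; simp [charmatrix_apply_eq]
    · rw [charmatrix_apply_ne _ _ _ hi, Pi.single_eq_of_ne (Ne.symm hi)]; simp
  · refine Finset.prod_congr rfl fun j hj => ?_
    rw [Matrix.updateRow_ne]
    simpa using (Finset.ne_of_mem_erase hj)

section
variable {A : Type*} [CommRing A] {N : ℕ} (U : Matrix (Fin N) (Fin N) A)

/-- resolvent-type matrix -/
noncomputable def DD (b : A) : Matrix (Fin N) (Fin N) A := U * adjugate (scalar (Fin N) b - U)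

theorem chi_eval (b : A) : U.charpoly.eval b = det (scalar (Fin N) b - U) := by
  exact Matrix.eval_charpoly U b

theorem chi_deriv_eval (b : A) :
    (Polynomial.derivative U.charpoly).eval b = (adjugate (scalar (Fin N) b - U)).trace := by
  rw [derivative_charpoly', ← Polynomial.coe_evalRingHom]
  have h := RingHom.map_adjugate (Polynomial.evalRingHom b) (charmatrix U)
  have h2 : (Polynomial.evalRingHom b).mapMatrix (charmatrix U) = scalar (Fin N) b - U := by
    ext i j
    by_cases hij : i = j
    · subst hij; simp [charmatrix_apply_eq]
    · simp [charmatrix_apply_ne _ _ _ hij, hij]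
  rw [h2] at h
  rw [← h]
  simp [trace]

theorem DD_eq (b : A) : DD U b = b • adjugate (scalar (Fin N) b - U) -
    (U.charpoly.eval b) • (1 : Matrix (Fin N) (Fin N) A) := by
  rw [chi_eval, ← mul_adjugate, Matrix.sub_mul, DD]
  simp only [scalar_apply, ← smul_one_eq_diagonal, Matrix.smul_mul, Matrix.one_mul]
  abel

theorem DD_trace (b : A) : (DD U b).trace = b * (Polynomial.derivative U.charpoly).eval b
    - N * U.charpoly.eval b := by
  rw [DD_eq, trace_sub, trace_smul, trace_smul, chi_deriv_eval]
  simp [mul_comm]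

theorem DD_mul_trace (b c : A) : (b - c) * (DD U b * DD U c).trace =
    -(b * (b * (Polynomial.derivative U.charpoly).eval b) * U.charpoly.eval c -
      c * (c * (Polynomial.derivative U.charpoly).eval c) * U.charpoly.eval b) +
      N * (b - c) * (U.charpoly.eval b * U.charpoly.eval c) := by
  have key : (c - b) • (adjugate (scalar (Fin N) b - U) * adjugate (scalar (Fin N) c - U)) =
      (U.charpoly.eval c) • adjugate (scalar (Fin N) b - U) -
      (U.charpoly.eval b) • adjugate (scalar (Fin N) c - U) := by
    have h1 : adjugate (scalar (Fin N) b - U) * ((scalar (Fin N) c - U) *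
        adjugate (scalar (Fin N) c - U)) = (U.charpoly.eval c) • adjugate (scalar (Fin N) b - U) := by
      rw [mul_adjugate, chi_eval]; simp
    have h2 : (adjugate (scalar (Fin N) b - U) * (scalar (Fin N) b - U)) *
        adjugate (scalar (Fin N) c - U) = (U.charpoly.eval b) • adjugate (scalar (Fin N) c - U) := by
      rw [adjugate_mul, chi_eval]; simp
    rw [← h1, ← h2]
    have : scalar (Fin N) c - U = scalar (Fin N) (c - b) + (scalar (Fin N) b - U) := by
      rw [map_sub]; abel
    conv_rhs => enter [1, 2, 1]; rw [this]
    rw [Matrix.add_mul, Matrix.mul_add, Matrix.mul_assoc, add_sub_cancel_right]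
    simp only [scalar_apply, ← smul_one_eq_diagonal, Matrix.smul_mul, Matrix.one_mul, Matrix.mul_smul]
  have kt := congrArg trace key
  rw [trace_smul, trace_sub, trace_smul, trace_smul, ← chi_deriv_eval, ← chi_deriv_eval] at kt
  simp only [smul_eq_mul] at kt
  have : (DD U b * DD U c).trace = b * c * (adjugate (scalar (Fin N) b - U) * adjugate (scalar (Fin N) c - U)).trace
     - b * (Polynomial.derivative U.charpoly).eval b * U.charpoly.eval c
     - c * (Polynomial.derivative U.charpoly).eval c * U.charpoly.eval b
     + N * (U.charpoly.eval b * U.charpoly.eval c) := by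
    rw [DD_eq, DD_eq]
    simp only [Matrix.sub_mul, Matrix.mul_sub, trace_sub, Matrix.smul_mul, Matrix.mul_smul, trace_smul,
      Matrix.mul_one, Matrix.one_mul, ← chi_deriv_eval, trace_one, smul_eq_mul, Fintype.card_fin]
    ring
  rw [this]
  linear_combination (- b * c) * kt

end
end ACR



namespace ACR

/-- abstract equivariance of a functional -/
def EqInv {A : Type*} [CommRing A] [Algebra ℂ A] {N : ℕ} (U : Matrix (Fin N) (Fin N) A)
    (L : A →ₗ[ℂ] ℂ) (M : ℕ) : Prop :=
  ∀ d ∈ unitaryGroup (Fin N) ℂ, ∃ τ : A →ₐ[ℂ] A,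
    U.map τ = d.map (algebraMap ℂ A) * U ∧ ∀ f, L (τ f) = d.det ^ M * L f

section
variable {A : Type*} [CommRing A] [Algebra ℂ A] {N : ℕ}

/-- quadratic form -/
noncomputable def qf (D : Matrix (Fin N) (Fin N) A) (v : Fin N → ℂ) : A :=
  ∑ i, ∑ j, algebraMap ℂ A (star (v i) * v j) * D i j

theorem rankone_unitary (v : Fin N → ℂ) (n : ℂ) (hn : star v ⬝ᵥ v = n) (hn0 : n ≠ 0)
    (z : ℂ) (hz : z * star z = 1) :
    (1 + ((z - 1) / n) • vecMulVec v (star v)) ∈ unitaryGroup (Fin N) ℂ := by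
  rw [mem_unitaryGroup_iff]
  have hns : star n = n := by
    rw [← hn, ← star_dotProduct_star, star_star, dotProduct_comm]
  have h1 : star (vecMulVec v (star v)) = vecMulVec v (star v) := by
    ext i j; simp [star_apply, vecMulVec_apply, mul_comm]
  have h2 : vecMulVec v (star v) * vecMulVec v (star v) = n • vecMulVec v (star v) := by
    rw [vecMulVec_mul_vecMulVec, hn]
    ext i j; simp [vecMulVec_apply]; ring
  rw [star_add, star_smul, star_one, h1, add_mul, mul_add, mul_add, one_mul, one_mul, mul_one,
    Matrix.smul_mul, Matrix.mul_smul, h2, smul_smul, smul_smul]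
  rw [star_div₀, star_sub, star_one, hns]
  have : (star z - 1) / n + (z - 1) / n + (z - 1) / n * ((star z - 1) / n * n) = 0 := by
    field_simp
    linear_combination hz
  ext i j
  simp only [Matrix.add_apply, Matrix.smul_apply, smul_eq_mul]
  linear_combination (vecMulVec v (star v) i j) * this

theorem tau_chi (U : Matrix (Fin N) (Fin N) A) (τ : A →ₐ[ℂ] A) (v : Fin N → ℂ) (s : ℂ)
    (hτ : U.map τ = (1 + s • vecMulVec v (star v)).map (algebraMap ℂ A) * U) (c : ℂ) :
    τ (U.charpoly.eval (algebraMap ℂ A c)) =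
      U.charpoly.eval (algebraMap ℂ A c) - algebraMap ℂ A s * qf (DD U (algebraMap ℂ A c)) v := by
  have h0 : τ (U.charpoly.eval (algebraMap ℂ A c)) =
      (U.map τ).charpoly.eval (algebraMap ℂ A c) := by
    have := Matrix.charpoly_map U (τ : A →+* A)
    have e : U.map τ = U.map (τ : A →+* A) := rfl
    have e2 : algebraMap ℂ A c = (τ : A →+* A) (algebraMap ℂ A c) := (AlgHom.commutes τ c).symm
    rw [e, this, Polynomial.eval_map]
    conv_rhs => rw [e2]
    exact (Polynomial.eval₂_at_apply (τ : A →+* A) _).symm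
  rw [h0, hτ, chi_eval, chi_eval]
  set a := algebraMap ℂ A
  have h1 : scalar (Fin N) (a c) - (1 + s • vecMulVec v (star v)).map a * U =
      (scalar (Fin N) (a c) - U) + vecMulVec (fun i => - (a s * a (v i)))
        ((fun i => a (star (v i))) ᵥ* U) := by
    have : (1 + s • vecMulVec v (star v)).map a = 1 + vecMulVec (fun i => (a s * a (v i)))
        (fun i => a (star (v i))) := by
      ext i j
      simp [vecMulVec_apply, Matrix.one_apply, mul_assoc]
    rw [this, add_mul, one_mul, vecMulVec_mul]
    have h2 : vecMulVec (fun i => - (a s * a (v i))) ((fun i => a (star (v i))) ᵥ* U) =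
      - vecMulVec (fun i => (a s * a (v i))) ((fun i => a (star (v i))) ᵥ* U) := by
      ext i j; simp [vecMulVec_apply]
    rw [h2]; abel
  rw [h1, det_add_vecMulVec']
  rw [← Matrix.dotProduct_mulVec, Matrix.mulVec_mulVec, qf]
  change _ + _ ⬝ᵥ (DD U (a c) *ᵥ _) = _
  have aux : ∀ x y z : A, y = -z → x + y = x - z := fun x y z h => by rw [h]; ring
  apply aux
  simp only [dotProduct, mulVec, Finset.mul_sum, ← Finset.sum_neg_distrib]
  refine Finset.sum_congr rfl fun i _ => Finset.sum_congr rfl fun j _ => ?_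
  rw [map_mul]; ring

theorem unit_circle_infinite : {z : ℂ | z * star z = 1}.Infinite := by
  have h : ((fun t : ℝ => Complex.exp (t * Complex.I)) '' Set.Ioc (-Real.pi) Real.pi).Infinite := by
    apply Set.Infinite.image
    · intro x hx y hy hxy
      have := congrArg Complex.arg hxy
      simp only [Complex.arg_exp_mul_I] at this
      rwa [(toIocMod_eq_self _).mpr (by rw [show -Real.pi + 2 * Real.pi = Real.pi by ring]; exact hx),
        (toIocMod_eq_self _).mpr (by rw [show -Real.pi + 2 * Real.pi = Real.pi by ring]; exact hy)] at this
    · exact Set.Ioc_infinite (by linarith [Real.pi_pos])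
  refine h.mono ?_
  rintro _ ⟨t, ht, rfl⟩
  simp [Complex.mul_conj, Complex.normSq_eq_norm_sq, Complex.norm_exp_ofReal_mul_I]

theorem exp_identity {U : Matrix (Fin N) (Fin N) A} {L : A →ₗ[ℂ] ℂ} {M : ℕ}
    (h : EqInv U L M) (v : Fin N → ℂ) (hv : star v ⬝ᵥ v ≠ 0) {K : ℕ} (b : Fin K → ℂ)
    (z : ℂ) (hz : z * star z = 1) :
    L (∏ k, (U.charpoly.eval (algebraMap ℂ A (b k)) -
      algebraMap ℂ A ((z - 1) / (star v ⬝ᵥ v)) * qf (DD U (algebraMap ℂ A (b k))) v)) =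
    z ^ M * L (∏ k, U.charpoly.eval (algebraMap ℂ A (b k))) := by
  obtain ⟨τ, h1, h2⟩ := h _ (rankone_unitary v _ rfl hv z hz)
  have hd : det (1 + ((z - 1) / (star v ⬝ᵥ v)) • vecMulVec v (star v)) = z := by
    rw [← smul_vecMulVec, det_add_vecMulVec']
    simp
    field_simp
    ring
  have h3 := h2 (∏ k, U.charpoly.eval (algebraMap ℂ A (b k)))
  rw [hd, map_prod τ] at h3
  rw [← h3]
  simp only [tau_chi U τ v _ h1]

theorem poly_identity {U : Matrix (Fin N) (Fin N) A} {L : A →ₗ[ℂ] ℂ} {M : ℕ}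
    (h : EqInv U L M) (v : Fin N → ℂ) (hv : star v ⬝ᵥ v ≠ 0) {K : ℕ} (b : Fin K → ℂ) (m : ℕ) :
    L ((∏ k, (Polynomial.C (U.charpoly.eval (algebraMap ℂ A (b k))) -
      Polynomial.C (qf (DD U (algebraMap ℂ A (b k))) v) * Polynomial.X)).coeff m) =
    (M.choose m) * (star v ⬝ᵥ v) ^ m * L (∏ k, U.charpoly.eval (algebraMap ℂ A (b k))) := by
  set T := L (∏ k, U.charpoly.eval (algebraMap ℂ A (b k)))
  set n := star v ⬝ᵥ v with hn
  set P := ∏ k, (Polynomial.C (U.charpoly.eval (algebraMap ℂ A (b k))) -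
      Polynomial.C (qf (DD U (algebraMap ℂ A (b k))) v) * Polynomial.X) with hP
  let p : Polynomial ℂ := ∑ i ∈ P.support, Polynomial.monomial i (L (P.coeff i))
  have hc : ∀ i, p.coeff i = L (P.coeff i) := by
    intro i
    simp only [p, Polynomial.finsetSum_coeff, Polynomial.coeff_monomial]
    rw [Finset.sum_ite_eq']
    split_ifs with hi
    · rfl
    · rw [Polynomial.notMem_support_iff.mp hi, map_zero]
  have hev : ∀ s : ℂ, p.eval s = L (P.eval (algebraMap ℂ A s)) := by
    intro s
    rw [Polynomial.eval_eq_sum (p := P), Polynomial.sum, map_sum]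
    simp only [p, Polynomial.eval_finsetSum, Polynomial.eval_monomial]
    refine Finset.sum_congr rfl fun i _ => ?_
    rw [← map_pow, mul_comm (P.coeff i), ← Algebra.smul_def, map_smul, smul_eq_mul, mul_comm]
  have hpeq : p = Polynomial.C T * (1 + Polynomial.C n * Polynomial.X) ^ M := by
    apply Polynomial.eq_of_infinite_eval_eq
    have hinf : ((fun z : ℂ => (z - 1) / n) '' {z : ℂ | z * star z = 1}).Infinite := by
      apply unit_circle_infinite.image
      intro x _ y _ hxy
      simpa [div_left_inj' hv] using hxy
    refine hinf.mono ?_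
    rintro _ ⟨z, hz, rfl⟩
    have := exp_identity h v hv b z hz
    simp only [Set.mem_ofPred_eq, hev, hP, Polynomial.eval_prod, Polynomial.eval_sub, Polynomial.eval_mul,
      Polynomial.eval_C, Polynomial.eval_X, Polynomial.eval_pow, Polynomial.eval_add, Polynomial.eval_one]
    rw [mul_div_cancel₀ _ hv]
    rw [show (1 + (z - 1)) = z by ring, mul_comm T, ← this]
    simp only [mul_comm]
    rfl
  rw [← hc, hpeq, Polynomial.coeff_C_mul]
  have : (1 + Polynomial.C n * Polynomial.X : Polynomial ℂ) ^ M =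
      ((1 + Polynomial.X) ^ M : Polynomial ℂ).comp (Polynomial.C n * Polynomial.X) := by simp
  rw [this, Polynomial.comp_C_mul_X_coeff, Polynomial.coeff_one_add_X_pow]
  ring

theorem coeff_one_prod {K : ℕ} (X Y : Fin K → A) :
    (∏ k, (Polynomial.C (X k) - Polynomial.C (Y k) * Polynomial.X)).coeff 1 =
      - ∑ k, (∏ l ∈ Finset.univ.erase k, X l) * Y k := by
  have : ∀ P : Polynomial A, P.coeff 1 = (Polynomial.derivative P).eval 0 := by
    intro P; rw [← Polynomial.coeff_zero_eq_eval_zero, Polynomial.coeff_derivative]; simp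
  rw [this, Polynomial.derivative_prod_finset, Polynomial.eval_finsetSum, ← Finset.sum_neg_distrib]
  refine Finset.sum_congr rfl fun k _ => ?_
  simp [Polynomial.eval_prod]

theorem coeff_two_prod {K : ℕ} (X Y : Fin K → A) :
    2 * (∏ k, (Polynomial.C (X k) - Polynomial.C (Y k) * Polynomial.X)).coeff 2 =
      ∑ k, ∑ l ∈ Finset.univ.erase k, (∏ j ∈ (Finset.univ.erase k).erase l, X j) * (Y k * Y l) := by
  have : ∀ P : Polynomial A, 2 * P.coeff 2 = (Polynomial.derivative (Polynomial.derivative P)).eval 0 := by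
    intro P; rw [← Polynomial.coeff_zero_eq_eval_zero, Polynomial.coeff_derivative,
      Polynomial.coeff_derivative]; simp; ring
  rw [this, Polynomial.derivative_prod_finset, Polynomial.derivative_sum, Polynomial.eval_finsetSum]
  refine Finset.sum_congr rfl fun k _ => ?_
  simp only [Polynomial.derivative_mul, Polynomial.derivative_sub, Polynomial.derivative_C,
    Polynomial.derivative_X, Polynomial.derivative_prod_finset]
  simp only [Polynomial.eval_prod, Polynomial.eval_finsetSum, Finset.sum_mul, Polynomial.eval_add,
    Polynomial.eval_mul, Polynomial.eval_sub, Polynomial.eval_C, Polynomial.eval_X,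
    Polynomial.eval_zero, Polynomial.eval_one, Polynomial.derivative_one, mul_zero, zero_mul, add_zero,
    sub_zero, zero_add, zero_sub, mul_one, Polynomial.derivative_neg, Polynomial.derivative_zero, Polynomial.eval_neg, neg_zero]
  simp only [Polynomial.derivative_C, Polynomial.eval_zero, neg_zero, mul_zero, add_zero]
  refine Finset.sum_congr rfl fun l _ => ?_
  ring

end
end ACR


namespace ACR

section
variable {A : Type*} [CommRing A] [Algebra ℂ A] {N : ℕ}

/-- test vector -/
noncomputable def pv (i j : Fin N) (ζ : ℂ) : Fin N → ℂ := Pi.single i 1 + ζ • Pi.single j 1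

theorem qf_pair (D : Matrix (Fin N) (Fin N) A) (i j : Fin N) (ζ : ℂ) :
    qf D (pv i j ζ) = D i i + algebraMap ℂ A ζ * D i j + algebraMap ℂ A (star ζ) * D j i
      + algebraMap ℂ A (ζ * star ζ) * D j j := by
  unfold qf pv
  simp only [Pi.add_apply, Pi.smul_apply, Pi.single_apply, smul_eq_mul, star_add, star_mul', map_mul, map_add,
    apply_ite star, star_one, star_zero, apply_ite (algebraMap ℂ A), map_one, map_zero, add_mul, mul_add, Finset.sum_add_distrib]
  simp [mul_assoc]
  ring

theorem qf_single (D : Matrix (Fin N) (Fin N) A) (i : Fin N) :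
    qf D (Pi.single i 1) = D i i := by
  unfold qf
  simp [Pi.single_apply, apply_ite]

theorem nv_pair (i j : Fin N) (ζ : ℂ) :
    star (pv i j ζ) ⬝ᵥ (pv i j ζ) = 1 + ζ * star ζ + if i = j then ζ + star ζ else 0 := by
  unfold pv
  by_cases h : i = j
  · subst h
    simp [star_add, add_dotProduct, dotProduct_add]; ring
  · simp [star_add, add_dotProduct, dotProduct_add, h, Ne.symm h]

theorem polar (D D' : Matrix (Fin N) (Fin N) A) :
    8 * (D.trace * D'.trace + (D * D').trace) =
      (∑ i, ∑ j, ∑ m : Fin 4, qf D (pv i j (Complex.I ^ (m : ℕ))) * qf D' (pv i j (Complex.I ^ (m : ℕ))))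
      - 8 * N * ∑ i, qf D (Pi.single i 1) * qf D' (Pi.single i 1) := by
  have hI : algebraMap ℂ A Complex.I * algebraMap ℂ A Complex.I = -1 := by
    rw [← map_mul, Complex.I_mul_I]; simp
  have h : ∀ i j, ∑ m : Fin 4, qf D (pv i j (Complex.I ^ (m : ℕ))) * qf D' (pv i j (Complex.I ^ (m : ℕ)))
      = 4 * (D i i * D' i i) + 4 * (D j j * D' j j) + 4 * (D i i * D' j j) + 4 * (D j j * D' i i)
        + 4 * (D i j * D' j i) + 4 * (D j i * D' i j) := by
    intro i j
    simp only [qf_pair, Fin.sum_univ_four]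
    have e2 : Complex.I ^ 2 = -1 := Complex.I_sq
    have e3 : Complex.I ^ 3 = -Complex.I := by rw [pow_succ, e2]; ring
    simp only [Fin.val_zero, Fin.val_one, Fin.val_two, show ((3 : Fin 4) : ℕ) = 3 from rfl, pow_zero, pow_one, e2, e3,
      star_one, star_neg, mul_one, map_one, map_neg, map_mul, Complex.star_def, Complex.conj_I]
    have hI2 : algebraMap ℂ A Complex.I * -algebraMap ℂ A Complex.I = 1 := by
      linear_combination -hI
    have hI3 : -algebraMap ℂ A Complex.I * algebraMap ℂ A Complex.I = 1 := by
      linear_combination -hI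
    simp only [neg_neg, hI2, hI3]
    linear_combination (2 * ((D i j - D j i) * (D' i j - D' j i))) * hI
  simp only [h, Finset.sum_add_distrib, qf_single, ← Finset.mul_sum, Finset.sum_const, Finset.card_univ,
    Fintype.card_fin, nsmul_eq_mul, trace, diag_apply, Matrix.mul_apply, ← Finset.sum_mul]
  rw [Finset.sum_comm (f := fun x i => D i x * D' x i)]
  have h3 : (∑ x, (N : A) * (D x x * D' x x)) = N * ∑ x, D x x * D' x x := by rw [Finset.mul_sum]
  simp only [← Finset.mul_sum, mul_assoc, mul_left_comm _ (N : A)] at *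
  ring

end
end ACR


namespace ACR

section
variable {A : Type*} [CommRing A] [Algebra ℂ A] {N : ℕ}

/-- X -/
noncomputable def cX (U : Matrix (Fin N) (Fin N) A) (b : ℂ) : A := U.charpoly.eval (algebraMap ℂ A b)
/-- Y -/
noncomputable def cY (U : Matrix (Fin N) (Fin N) A) (b : ℂ) : A :=
  algebraMap ℂ A b * (Polynomial.derivative U.charpoly).eval (algebraMap ℂ A b)

theorem SDv1 {U : Matrix (Fin N) (Fin N) A} {L : A →ₗ[ℂ] ℂ} {M : ℕ}
    (h : EqInv U L M) (v : Fin N → ℂ) (hv : star v ⬝ᵥ v ≠ 0) {K : ℕ} (b : Fin K → ℂ) :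
    ∑ k, L ((∏ l ∈ Finset.univ.erase k, cX U (b l)) * qf (DD U (algebraMap ℂ A (b k))) v) =
      - (M * (star v ⬝ᵥ v) * L (∏ k, cX U (b k))) := by
  have := poly_identity h v hv b 1
  rw [coeff_one_prod] at this
  simp only [map_neg, map_sum, Nat.choose_one_right, pow_one] at this
  unfold cX
  linear_combination -this

theorem SDv2 {U : Matrix (Fin N) (Fin N) A} {L : A →ₗ[ℂ] ℂ} {M : ℕ}
    (h : EqInv U L M) (v : Fin N → ℂ) {K : ℕ} (b : Fin K → ℂ) :
    ∑ k, ∑ l ∈ Finset.univ.erase k, L ((∏ j ∈ (Finset.univ.erase k).erase l, cX U (b j)) *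
      (qf (DD U (algebraMap ℂ A (b k))) v * qf (DD U (algebraMap ℂ A (b l))) v)) =
      (M * (M - 1)) * (star v ⬝ᵥ v) ^ 2 * L (∏ k, cX U (b k)) := by
  by_cases hv : star v ⬝ᵥ v = 0
  · have hv0 : v = 0 := by
      open scoped ComplexOrder in exact dotProduct_star_self_eq_zero.mp hv
    subst hv0
    simp [qf]
  have := poly_identity h v hv b 2
  have h2 := congrArg L (coeff_two_prod (fun k => U.charpoly.eval (algebraMap ℂ A (b k)))
    (fun k => qf (DD U (algebraMap ℂ A (b k))) v))
  rw [show (2 : A) = algebraMap ℂ A 2 from (map_ofNat _ 2).symm, ← Algebra.smul_def, map_smul, this] at h2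
  simp only [map_sum, smul_eq_mul] at h2
  unfold cX
  rw [← h2, Nat.cast_choose_two]
  ring

theorem SD1 {U : Matrix (Fin N) (Fin N) A} {L : A →ₗ[ℂ] ℂ} {M : ℕ}
    (h : EqInv U L M) {K : ℕ} (b : Fin K → ℂ) :
    ∑ k, (L ((∏ l ∈ Finset.univ.erase k, cX U (b l)) * cY U (b k)) - N * L (∏ k, cX U (b k))) =
      - (N * M * L (∏ k, cX U (b k))) := by
  have h1 : ∀ i : Fin N, _ := fun i => SDv1 h (Pi.single i 1) (by simp) b
  have h2 := Finset.sum_congr (s₁ := Finset.univ) rfl fun i _ => h1 i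
  rw [Finset.sum_comm] at h2
  have e : ∀ k, ∑ i, L ((∏ l ∈ Finset.univ.erase k, cX U (b l)) *
      qf (DD U (algebraMap ℂ A (b k))) (Pi.single i 1)) =
      L ((∏ l ∈ Finset.univ.erase k, cX U (b l)) * cY U (b k)) - N * L (∏ k, cX U (b k)) := by
    intro k
    simp only [qf_single]
    rw [← map_sum, ← Finset.mul_sum]
    change L (_ * (DD U (algebraMap ℂ A (b k))).trace) = _
    rw [DD_trace, mul_sub, map_sub]
    congr 1
    rw [← Finset.prod_erase_mul _ _ (Finset.mem_univ k)]
    change L (_ * (N * cX U (b k))) = _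
    rw [mul_left_comm, ← nsmul_eq_mul, map_nsmul, nsmul_eq_mul]
  simp only [e] at h2
  rw [h2]
  simp
  ring

theorem SD2 {U : Matrix (Fin N) (Fin N) A} {L : A →ₗ[ℂ] ℂ} {M : ℕ}
    (h : EqInv U L M) {K : ℕ} (b : Fin K → ℂ) :
    ∑ k, ∑ l ∈ Finset.univ.erase k, L ((∏ j ∈ (Finset.univ.erase k).erase l, cX U (b j)) *
      ((DD U (algebraMap ℂ A (b k))).trace * (DD U (algebraMap ℂ A (b l))).trace +
        (DD U (algebraMap ℂ A (b k)) * DD U (algebraMap ℂ A (b l))).trace)) =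
      (N * (N + 1)) * (M * (M - 1)) * L (∏ k, cX U (b k)) := by
  have h8 : ∀ (P : A) (D D' : Matrix (Fin N) (Fin N) A), L (P * (D.trace * D'.trace + (D * D').trace)) =
      (1 / 8) * ((∑ i, ∑ j, ∑ m : Fin 4, L (P * (qf D (pv i j (Complex.I ^ (m : ℕ))) *
        qf D' (pv i j (Complex.I ^ (m : ℕ))))))
      - 8 * N * ∑ i, L (P * (qf D (Pi.single i 1) * qf D' (Pi.single i 1)))) := by
    intro P D D'
    have h2 := congrArg (fun x => L (P * x)) (polar D D')
    simp only [mul_sub, map_sub] at h2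
    rw [show (8 : A) = algebraMap ℂ A 8 from (map_ofNat _ 8).symm, show (N : A) = algebraMap ℂ A N from (map_natCast _ N).symm,
      ← map_mul (algebraMap ℂ A), ← Algebra.smul_def, ← Algebra.smul_def, mul_smul_comm, mul_smul_comm, map_smul, map_smul] at h2
    simp only [Finset.mul_sum, map_sum, smul_eq_mul] at h2 ⊢
    rw [mul_sub]
    simp only [Finset.mul_sum] at h2 ⊢
    rw [← mul_right_inj' (show (8 : ℂ) ≠ 0 by norm_num), h2]
    simp only [mul_sub, Finset.mul_sum, ← mul_assoc]
    norm_num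
  simp only [h8]
  simp only [← Finset.mul_sum, Finset.sum_sub_distrib]
  have c1 : ∀ (F : Fin K → Fin K → Fin N → ℂ), (∑ k, ∑ l ∈ Finset.univ.erase k, ∑ i, F k l i) =
      ∑ i, ∑ k, ∑ l ∈ Finset.univ.erase k, F k l i := by
    intro F
    rw [Finset.sum_comm]
    exact Finset.sum_congr rfl fun k _ => Finset.sum_comm
  have c2 : ∀ (F : Fin K → Fin K → Fin 4 → ℂ), (∑ k, ∑ l ∈ Finset.univ.erase k, ∑ i, F k l i) =
      ∑ i, ∑ k, ∑ l ∈ Finset.univ.erase k, F k l i := by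
    intro F
    rw [Finset.sum_comm]
    exact Finset.sum_congr rfl fun k _ => Finset.sum_comm
  rw [c1, c1]
  simp only [c1, c2, SDv2 h]
  simp only [nv_pair, Fin.sum_univ_four]
  have e2 : Complex.I ^ 2 = -1 := Complex.I_sq
  have e3 : Complex.I ^ 3 = -Complex.I := by rw [pow_succ, e2]; ring
  simp only [Fin.val_zero, Fin.val_one, Fin.val_two, show ((3 : Fin 4) : ℕ) = 3 from rfl, pow_zero, pow_one, e2, e3,
      star_one, star_neg, mul_one, Complex.star_def, Complex.conj_I]
  have e4 : ∀ i j : Fin N, (M * (M - 1) : ℂ) * (1 + 1 + if i = j then (1 + 1 : ℂ) else 0) ^ 2 * L (∏ k, cX U (b k)) +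
      (M * (M - 1) : ℂ) * (1 + Complex.I * -Complex.I + if i = j then Complex.I + -Complex.I else 0) ^ 2 * L (∏ k, cX U (b k)) +
      (M * (M - 1) : ℂ) * (1 + -1 * -1 + if i = j then (-1 + -1 : ℂ) else 0) ^ 2 * L (∏ k, cX U (b k)) +
      (M * (M - 1) : ℂ) * (1 + -Complex.I * - -Complex.I + if i = j then -Complex.I + - -Complex.I else 0) ^ 2 * L (∏ k, cX U (b k))
      = (M * (M - 1) : ℂ) * L (∏ k, cX U (b k)) * (16 + if i = j then 8 else 0) := by
    intro i j
    have hI := Complex.I_mul_I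
    simp only [neg_neg, mul_neg, neg_mul, hI]
    split_ifs <;> ring
  simp only [e4]
  simp [← Finset.mul_sum, Finset.sum_add_distrib]
  ring

end
end ACR


namespace ACR

section
variable {A : Type*} [CommRing A] [Algebra ℂ A] {N K : ℕ}
open MvPolynomial

/-- Euler operator -/
noncomputable def th {R : Type*} [CommRing R] {K : ℕ} (k : Fin K) (p : MvPolynomial (Fin K) R) :
    MvPolynomial (Fin K) R := X k * pderiv k p

theorem th_add {R : Type*} [CommRing R] (k : Fin K) (p q : MvPolynomial (Fin K) R) :
    th k (p + q) = th k p + th k q := by simp [th, mul_add]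

theorem th_mul {R : Type*} [CommRing R] (k : Fin K) (p q : MvPolynomial (Fin K) R) :
    th k (p * q) = th k p * q + p * th k q := by
  simp only [th, Derivation.leibniz, smul_eq_mul]; ring

theorem th_sum {R : Type*} [CommRing R] {ι : Type*} (s : Finset ι) (k : Fin K) (p : ι → MvPolynomial (Fin K) R) :
    th k (∑ i ∈ s, p i) = ∑ i ∈ s, th k (p i) := by simp [th, Finset.mul_sum]

theorem th_monomial {R : Type*} [CommRing R] (k : Fin K) (ν : Fin K →₀ ℕ) (a : R) :
    th k (monomial ν a) = monomial ν (ν k * a) := by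
  rw [th, pderiv_monomial, X, monomial_mul]
  by_cases h : ν k = 0
  · simp [h]
  · rw [add_comm, Finsupp.sub_add_single_one_cancel h]; simp [mul_comm]

theorem coeff_th {R : Type*} [CommRing R] (k : Fin K) (ν : Fin K →₀ ℕ) (p : MvPolynomial (Fin K) R) :
    coeff ν (th k p) = ν k * coeff ν p := by
  induction p using MvPolynomial.induction_on' with
  | monomial μ a =>
    rw [th_monomial, coeff_monomial, coeff_monomial]
    split_ifs with h
    · rw [h]
    · simp
  | add p q hp hq => rw [th_add, coeff_add, coeff_add, hp, hq, mul_add]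

/-- coefficientwise functional -/
noncomputable def ML (L : A →ₗ[ℂ] ℂ) (p : MvPolynomial (Fin K) A) : MvPolynomial (Fin K) ℂ :=
  ∑ ν ∈ p.support, monomial ν (L (coeff ν p))

theorem coeff_ML (L : A →ₗ[ℂ] ℂ) (p : MvPolynomial (Fin K) A) (ν) :
    coeff ν (ML L p) = L (coeff ν p) := by
  simp only [ML, coeff_sum, coeff_monomial]
  rw [Finset.sum_ite_eq']
  split_ifs with hi
  · rfl
  · rw [notMem_support_iff.mp hi, map_zero]

theorem eval_ML (L : A →ₗ[ℂ] ℂ) (p : MvPolynomial (Fin K) A) (b : Fin K → ℂ) :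
    eval b (ML L p) = L (eval (fun k => algebraMap ℂ A (b k)) p) := by
  rw [eval_eq' (f := p), map_sum]
  simp only [ML, map_sum, eval_monomial]
  refine Finset.sum_congr rfl fun ν _ => ?_
  rw [Finsupp.prod_fintype _ _ (by simp)]
  simp only [← map_pow]
  rw [← map_prod, mul_comm (coeff ν p), ← Algebra.smul_def, map_smul, smul_eq_mul, mul_comm]

theorem th_ML (L : A →ₗ[ℂ] ℂ) (k : Fin K) (p : MvPolynomial (Fin K) A) :
    th k (ML L p) = ML L (th k p) := by
  ext ν
  rw [coeff_th, coeff_ML, coeff_ML, coeff_th, ← nsmul_eq_mul, ← nsmul_eq_mul, map_nsmul]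

/-- product of characteristic polynomials -/
noncomputable def pA (U : Matrix (Fin N) (Fin N) A) (S : Finset (Fin K)) : MvPolynomial (Fin K) A :=
  ∏ k ∈ S, Polynomial.aeval (X k : MvPolynomial (Fin K) A) U.charpoly

theorem pderiv_aeval (k l : Fin K) (p : Polynomial A) :
    pderiv k (Polynomial.aeval (X l : MvPolynomial (Fin K) A) p) =
      if k = l then Polynomial.aeval (X l : MvPolynomial (Fin K) A) (Polynomial.derivative p) else 0 := by
  have := Derivation.comp_aeval_eq (R := A) (X l : MvPolynomial (Fin K) A) (pderiv k) p
  rw [this, pderiv_X]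
  by_cases h : k = l
  · subst h; simp
  · simp [h, Ne.symm h]

theorem eval_aeval (l : Fin K) (p : Polynomial A) (c : Fin K → A) :
    eval c (Polynomial.aeval (X l : MvPolynomial (Fin K) A) p) = p.eval (c l) := by
  have := Polynomial.aeval_algHom_apply (MvPolynomial.aeval c : MvPolynomial (Fin K) A →ₐ[A] A) (X l) p
  simp at this
  rw [← MvPolynomial.coe_aeval_eq_eval]
  exact this.symm

theorem th_aeval_ne (U : Matrix (Fin N) (Fin N) A) {k : Fin K} {S : Finset (Fin K)} (h : k ∉ S) :
    th k (pA U S) = 0 := by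
  induction S using Finset.induction_on with
  | empty => simp [pA, th]
  | insert a S ha ih =>
    simp only [Finset.mem_insert, not_or] at h
    have ih := ih h.2
    rw [pA, Finset.prod_insert ha, ← pA, th_mul, ih, th, pderiv_aeval, if_neg h.1]; simp

theorem th_pA (U : Matrix (Fin N) (Fin N) A) {k : Fin K} {S : Finset (Fin K)} (h : k ∈ S) :
    th k (pA U S) = pA U (S.erase k) *
      (X k * Polynomial.aeval (X k : MvPolynomial (Fin K) A) (Polynomial.derivative U.charpoly)) := by
  have : pA U S = Polynomial.aeval (X k : MvPolynomial (Fin K) A) U.charpoly * pA U (S.erase k) := by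
    exact (Finset.mul_prod_erase _ (fun k => Polynomial.aeval (X k : MvPolynomial (Fin K) A) U.charpoly) h).symm
  rw [this, th_mul, th_aeval_ne U (by simp)]
  rw [th, pderiv_aeval, if_pos rfl]; ring

theorem eval_pA (U : Matrix (Fin N) (Fin N) A) (S : Finset (Fin K)) (b : Fin K → ℂ) :
    eval (fun k => algebraMap ℂ A (b k)) (pA U S) = ∏ k ∈ S, cX U (b k) := by
  simp [pA, eval_aeval, cX]

theorem eval_th_pA (U : Matrix (Fin N) (Fin N) A) (S : Finset (Fin K)) (b : Fin K → ℂ) (k : Fin K) (h : k ∈ S) :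
    eval (fun k => algebraMap ℂ A (b k)) (th k (pA U S)) = (∏ k ∈ S.erase k, cX U (b k)) * cY U (b k) := by
  rw [th_pA U h, map_mul, eval_pA, map_mul, eval_aeval, cY, eval_X]

theorem eval_th2_pA (U : Matrix (Fin N) (Fin N) A) (S : Finset (Fin K)) (b : Fin K → ℂ) (k l : Fin K) (h : k ∈ S)
    (hl : l ∈ S.erase k) :
    eval (fun k => algebraMap ℂ A (b k)) (th l (th k (pA U S))) =
      (∏ k ∈ (S.erase k).erase l, cX U (b k)) * (cY U (b k) * cY U (b l)) := by
  rw [th_pA U h, th_mul, map_add, map_mul, eval_th_pA U _ _ _ hl]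
  have hne : l ≠ k := Finset.ne_of_mem_erase hl
  have : th l (X k * Polynomial.aeval (X k : MvPolynomial (Fin K) A) (Polynomial.derivative U.charpoly)) = 0 := by
    rw [th, Derivation.leibniz, pderiv_aeval, if_neg hne, pderiv_X_of_ne hne.symm]; simp
  rw [this, map_mul, eval_X, eval_aeval, cY, cY]; simp; ring

/-- the polynomial T -/
noncomputable def pT (U : Matrix (Fin N) (Fin N) A) (L : A →ₗ[ℂ] ℂ) (K : ℕ) : MvPolynomial (Fin K) ℂ :=
  ML L (pA U Finset.univ)

theorem eval_pT (U : Matrix (Fin N) (Fin N) A) (L : A →ₗ[ℂ] ℂ) (b : Fin K → ℂ) :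
    eval b (pT U L K) = L (∏ k, cX U (b k)) := by rw [pT, eval_ML, eval_pA]

theorem eval_th_pT (U : Matrix (Fin N) (Fin N) A) (L : A →ₗ[ℂ] ℂ) (b : Fin K → ℂ) (k : Fin K) :
    eval b (th k (pT U L K)) = L ((∏ k ∈ Finset.univ.erase k, cX U (b k)) * cY U (b k)) := by
  rw [pT, th_ML, eval_ML, eval_th_pA _ _ _ _ (Finset.mem_univ k)]

theorem eval_th2_pT (U : Matrix (Fin N) (Fin N) A) (L : A →ₗ[ℂ] ℂ) (b : Fin K → ℂ) (k l : Fin K)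
    (hl : l ∈ Finset.univ.erase k) :
    eval b (th l (th k (pT U L K))) = L ((∏ k ∈ (Finset.univ.erase k).erase l, cX U (b k)) * (cY U (b k) * cY U (b l))) := by
  rw [pT, th_ML, th_ML, eval_ML, eval_th2_pA _ _ _ _ _ (Finset.mem_univ k) hl]

theorem D1_pT {U : Matrix (Fin N) (Fin N) A} {L : A →ₗ[ℂ] ℂ} {M : ℕ} (h : EqInv U L M) :
    ∑ k, th k (pT U L K) = C (N * (K - M) : ℂ) * pT U L K := by
  apply MvPolynomial.funext
  intro b
  have := SD1 h b
  rw [Finset.sum_sub_distrib] at this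
  simp only [← eval_th_pT, ← eval_pT] at this
  rw [map_sum, map_mul, eval_C]
  simp at this
  linear_combination this

theorem SD2' {U : Matrix (Fin N) (Fin N) A} {L : A →ₗ[ℂ] ℂ} {M : ℕ}
    (h : EqInv U L M) {K : ℕ} (b : Fin K → ℂ) (hb : Function.Injective b) :
    ∑ k, ∑ l ∈ Finset.univ.erase k, (eval b (th l (th k (pT U L K))) - N * eval b (th k (pT U L K))
       - N * eval b (th l (pT U L K)) + N * (N + 1) * eval b (pT U L K)
       - (b k * eval b (th k (pT U L K)) - b l * eval b (th l (pT U L K))) / (b k - b l)) =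
      (N * (N + 1)) * (M * (M - 1)) * eval b (pT U L K) := by
  rw [eval_pT, ← SD2 h b]
  refine Finset.sum_congr rfl fun k _ => Finset.sum_congr rfl fun l hl => ?_
  rw [eval_th2_pT _ _ _ _ _ hl]
  simp only [eval_th_pT]
  have hne : b k - b l ≠ 0 := sub_ne_zero.mpr (fun e => Finset.ne_of_mem_erase hl (hb e).symm)
  have hk : k ∈ Finset.univ.erase l := by
    simp only [Finset.mem_erase, Finset.mem_univ, and_true] at hl ⊢; exact hl.symm
  set P := ∏ k ∈ (Finset.univ.erase k).erase l, cX U (b k) with hP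
  have e1 : ∏ k ∈ Finset.univ.erase k, cX U (b k) = P * cX U (b l) := by
    rw [hP, Finset.prod_erase_mul _ _ hl]
  have e2 : ∏ k ∈ Finset.univ.erase l, cX U (b k) = P * cX U (b k) := by
    rw [hP, Finset.erase_right_comm, Finset.prod_erase_mul _ _ hk]
  have e3 : ∏ k, cX U (b k) = P * (cX U (b k) * cX U (b l)) := by
    rw [← Finset.prod_erase_mul _ _ (Finset.mem_univ k), e1]; ring
  rw [e1, e2, e3, DD_trace, DD_trace]
  have ht := DD_mul_trace U (algebraMap ℂ A (b k)) (algebraMap ℂ A (b l))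
  set tr := (DD U (algebraMap ℂ A (b k)) * DD U (algebraMap ℂ A (b l))).trace
  change _ = L (P * ((cY U (b k) - N * cX U (b k)) * (cY U (b l) - N * cX U (b l)) + tr))
  have ht2 : (b k - b l) • (P * tr) = - (b k • (P * (cY U (b k) * cX U (b l)))
     - b l • (P * (cY U (b l) * cX U (b k)))) + (N * (b k - b l)) • (P * (cX U (b k) * cX U (b l))) := by
    simp only [Algebra.smul_def, map_sub, map_mul, map_natCast]
    have : (algebraMap ℂ A (b k) - algebraMap ℂ A (b l)) * tr = -(algebraMap ℂ A (b k) * cY U (b k) * cX U (b l) -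
      algebraMap ℂ A (b l) * cY U (b l) * cX U (b k)) + N * (algebraMap ℂ A (b k) - algebraMap ℂ A (b l)) * (cX U (b k) * cX U (b l)) := ht
    linear_combination P * this
  have ht3 := congrArg L ht2
  simp only [map_smul, map_add, map_neg, map_sub, smul_eq_mul] at ht3
  have ex : P * ((cY U (b k) - N * cX U (b k)) * (cY U (b l) - N * cX U (b l)) + tr) =
     P * (cY U (b k) * cY U (b l)) - (N : ℂ) • (P * (cY U (b k) * cX U (b l)))
      - (N : ℂ) • (P * (cY U (b l) * cX U (b k))) + (N * N : ℂ) • (P * (cX U (b k) * cX U (b l))) + P * tr := by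
    simp only [Algebra.smul_def, map_mul, map_natCast]; ring
  rw [ex]
  simp only [map_smul, map_add, map_neg, map_sub, smul_eq_mul]
  rw [show P * cX U (b l) * cY U (b k) = P * (cY U (b k) * cX U (b l)) by ring,
    show P * cX U (b k) * cY U (b l) = P * (cY U (b l) * cX U (b k)) by ring]
  field_simp
  linear_combination -ht3

end
end ACR


namespace ACR

section
variable {K : ℕ}
open MvPolynomial

/-- generalized Vandermonde -/
noncomputable def gdet (ν0 : Fin K → ℕ) : MvPolynomial (Fin K) ℂ :=
  det (Matrix.of fun i j => (X i : MvPolynomial (Fin K) ℂ) ^ ν0 j)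

/-- exponent vector -/
noncomputable def ev (ν : Fin K → ℕ) : Fin K →₀ ℕ := Finsupp.equivFunOnFinite.symm ν

theorem gdet_eq (ν0 : Fin K → ℕ) : gdet ν0 = ∑ σ : Equiv.Perm (Fin K),
    monomial (ev (ν0 ∘ σ.symm)) (((Equiv.Perm.sign σ : ℤˣ) : ℤ) : ℂ) := by
  rw [gdet, det_apply']
  refine Finset.sum_congr rfl fun σ _ => ?_
  rw [monomial_eq, Finsupp.prod_fintype _ _ (by simp)]
  congr 1
  simp only [Matrix.of_apply]
  rw [← Equiv.prod_comp σ (fun i => X i ^ (ev (ν0 ∘ ⇑(Equiv.symm σ))) i)]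
  simp [ev]

theorem th_C_mul {R : Type*} [CommRing R] (k : Fin K) (c : R) (p : MvPolynomial (Fin K) R) : th k (C c * p) = C c * th k p := by
  rw [th, pderiv_C_mul, th]; ring

theorem D1_gdet (ν0 : Fin K → ℕ) : ∑ k, th k (gdet ν0) = C (∑ i, (ν0 i : ℂ)) * gdet ν0 := by
  rw [gdet_eq, Finset.mul_sum]
  simp only [th_sum]
  rw [Finset.sum_comm]
  refine Finset.sum_congr rfl fun σ _ => ?_
  simp only [th_monomial, C_mul_monomial]
  rw [← map_sum, ← Finset.sum_mul]
  congr 2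
  rw [← Equiv.sum_comp σ.symm (fun i => (ν0 i : ℂ))]
  simp [ev]

theorem D2_gdet (ν0 : Fin K → ℕ) : ∑ k, th k (th k (gdet ν0)) = C (∑ i, (ν0 i : ℂ) ^ 2) * gdet ν0 := by
  rw [gdet_eq, Finset.mul_sum]
  simp only [th_sum]
  rw [Finset.sum_comm]
  refine Finset.sum_congr rfl fun σ _ => ?_
  simp only [th_monomial, C_mul_monomial, ← mul_assoc]
  rw [← map_sum, ← Finset.sum_mul]
  congr 2
  rw [← Equiv.sum_comp σ.symm (fun i => (ν0 i : ℂ) ^ 2)]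
  simp [ev, sq]

/-- Vandermonde -/
noncomputable def pV (K : ℕ) : MvPolynomial (Fin K) ℂ := gdet (fun j => (j : ℕ))

theorem pV_eq : pV K = ∏ i, ∏ j ∈ Finset.Ioi i, (X j - X i) := by
  rw [← det_vandermonde]; rfl

theorem eval_pV_ne {b : Fin K → ℂ} (hb : Function.Injective b) : eval b (pV K) ≠ 0 := by
  rw [pV_eq]
  simp only [map_prod, map_sub, eval_X]
  rw [← det_vandermonde]
  exact det_vandermonde_ne_zero_iff.mpr hb

theorem eval_pV_eq_zero {b : Fin K → ℂ} (hb : ¬ Function.Injective b) : eval b (pV K) = 0 := by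
  by_contra h
  apply hb
  rw [pV_eq] at h
  simp only [map_prod, map_sub, eval_X] at h
  rw [← det_vandermonde] at h
  exact det_vandermonde_ne_zero_iff.mp h

theorem pV_ne : pV K ≠ 0 := by
  intro h
  have := eval_pV_ne (K := K) (b := fun i => ((i : ℕ) : ℂ)) (by
    intro i j hij
    have : ((i : ℕ) : ℂ) = ((j : ℕ) : ℂ) := hij
    exact Fin.ext (by exact_mod_cast this))
  rw [h] at this
  simp at this

theorem dir_prod (b t : Fin K → ℂ) {ι : Type*} (S : Finset ι) (f : ι → MvPolynomial (Fin K) ℂ)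
    (hf : ∀ s ∈ S, eval b (f s) ≠ 0) :
    ∑ k, eval b (th k (∏ s ∈ S, f s)) * t k = eval b (∏ s ∈ S, f s) *
      ∑ s ∈ S, (∑ k, eval b (th k (f s)) * t k) / eval b (f s) := by
  classical
  induction S using Finset.induction_on with
  | empty => simp [th]
  | insert a S ha ih =>
    have ih := ih (fun s hs => hf s (Finset.mem_insert_of_mem hs))
    have h0 := hf a (Finset.mem_insert_self _ _)
    rw [Finset.prod_insert ha, Finset.sum_insert ha]
    simp only [th_mul, map_add, map_mul, add_mul, Finset.sum_add_distrib, mul_assoc, ← Finset.mul_sum]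
    rw [ih]
    have : ∀ k, eval b (th k (f a)) * (eval b (∏ s ∈ S, f s) * t k) =
      eval b (∏ s ∈ S, f s) * (eval b (th k (f a)) * t k) := fun k => by ring
    simp only [this, ← Finset.mul_sum]
    field_simp

theorem dir_pV (b t : Fin K → ℂ) (hb : Function.Injective b) :
    ∑ k, eval b (th k (pV K)) * t k = eval b (pV K) *
      ∑ i, ∑ j ∈ Finset.Ioi i, (b j * t j - b i * t i) / (b j - b i) := by
  rw [pV_eq, Finset.prod_sigma', dir_prod, Finset.sum_sigma']
  · congr 1
    refine Finset.sum_congr rfl fun s hs => ?_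
    have : ∀ k, eval b (th k (X s.2 - X s.1 : MvPolynomial (Fin K) ℂ)) * t k = (if s.2 = k then b k * t k else 0)
       - if s.1 = k then b k * t k else 0 := by
      intro k
      simp only [th, map_sub, map_mul, eval_X, pderiv_X, Pi.single_apply]
      split_ifs <;> simp
    simp only [this, Finset.sum_sub_distrib]
    simp
  · intro s hs
    simp at hs
    simp only [map_sub, eval_X]
    exact sub_ne_zero.mpr (fun e => hs.ne (hb e).symm)

theorem pair_sum (b s : Fin K → ℂ) :
    ∑ k, ∑ l ∈ Finset.univ.erase k, (b k * s k - b l * s l) / (b k - b l) =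
      2 * ∑ i, ∑ j ∈ Finset.Ioi i, (b j * s j - b i * s i) / (b j - b i) := by
  have := Finset.sum_sum_Ioi_add_eq_sum_sum_off_diag (fun k l => (b k * s k - b l * s l) / (b k - b l))
  have e : ∀ k : Fin K, Finset.univ.erase k = ({k}ᶜ : Finset (Fin K)) := by intro k; ext; simp
  have sy : ∀ k l, (b k * s k - b l * s l) / (b k - b l) = (b l * s l - b k * s k) / (b l - b k) := by
    intro k l; rw [← neg_sub (b l), ← neg_sub (b l * s l), neg_div_neg_eq]
  simp only [e]
  rw [Finset.sum_congr rfl fun k _ => Finset.sum_congr rfl fun l _ => sy k l, ← this, Finset.mul_sum]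
  refine Finset.sum_congr rfl fun k _ => ?_
  rw [Finset.mul_sum]
  refine Finset.sum_congr rfl fun l _ => ?_
  rw [sy k l]; ring

variable {A : Type*} [CommRing A] [Algebra ℂ A] {N : ℕ}

theorem D1_Q {U : Matrix (Fin N) (Fin N) A} {L : A →ₗ[ℂ] ℂ} {M : ℕ} (h : EqInv U L M) :
    ∑ k, th k (pV K * pT U L K) = C ((∑ i : Fin K, ((i : ℕ) : ℂ)) + N * (K - M)) * (pV K * pT U L K) := by
  simp only [th_mul, Finset.sum_add_distrib, ← Finset.sum_mul, ← Finset.mul_sum]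
  rw [D1_pT h, pV, D1_gdet]
  simp only [C_add]
  ring

theorem D2_Q {U : Matrix (Fin N) (Fin N) A} {L : A →ₗ[ℂ] ℂ} {M : ℕ} (h : EqInv U L M) :
    ∑ k, th k (th k (pV K * pT U L K)) =
      C ((∑ i : Fin K, ((i : ℕ) : ℂ) ^ 2) + N * (K * (K - 1) - M * (M - 1)) + N ^ 2 * (K - M)) * (pV K * pT U L K) := by
  set c := (∑ i : Fin K, ((i : ℕ) : ℂ) ^ 2) + N * (K * (K - 1) - M * (M - 1)) + N ^ 2 * (K - M) with hc
  have key : (∑ k, th k (th k (pV K * pT U L K)) - C c * (pV K * pT U L K)) * pV K = 0 := by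
    apply MvPolynomial.funext
    intro b
    by_cases hb : Function.Injective b
    swap
    · rw [map_mul, eval_pV_eq_zero hb]; simp
    rw [map_mul, map_zero]
    apply mul_eq_zero_of_left
    rw [map_sub, sub_eq_zero]
    have h2 := SD2' h b hb
    have h1 := congrArg (eval b) (D1_pT (K := K) h)
    have h11 : ∑ l, th l (∑ k, th k (pT U L K)) = C (N * (K - M) : ℂ) * (C (N * (K - M) : ℂ) * pT U L K) := by
      rw [D1_pT h]
      simp only [th_C_mul, ← Finset.mul_sum]
      rw [D1_pT h]
    have h11 := congrArg (eval b) h11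
    simp only [th_sum] at h11
    have hV := congrArg (eval b) (D2_gdet (K := K) (fun j => (j : ℕ)))
    rw [← pV] at hV
    simp only [map_sum, map_mul, eval_C] at h1 h11 hV
    have hd := dir_pV b (fun k => eval b (th k (pT U L K))) hb
    have hp := pair_sum b (fun k => eval b (th k (pT U L K)))
    simp only [th_mul, th_add, map_sum, map_add, map_mul, eval_C, Finset.sum_add_distrib, ← Finset.sum_mul, ← Finset.mul_sum]
    rw [hV]
    rw [hd]
    simp only [Finset.sum_sub_distrib, Finset.sum_add_distrib] at h2
    rw [hp] at h2
    set s := ∑ i, ∑ j ∈ Finset.Ioi i, (b j * eval b (th j (pT U L K)) - b i * eval b (th i (pT U L K))) / (b j - b i)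
    have e1 : ∑ k, ∑ l ∈ Finset.univ.erase k, eval b (th l (th k (pT U L K))) =
       N * (K - M) * (N * (K - M) * eval b (pT U L K)) - ∑ k, eval b (th k (th k (pT U L K))) := by
      rw [← h11, Finset.sum_comm, ← Finset.sum_sub_distrib]
      refine Finset.sum_congr rfl fun k _ => ?_
      rw [Finset.sum_erase_eq_sub (Finset.mem_univ k)]
    have e2 : ∑ k : Fin K, ∑ l ∈ Finset.univ.erase k, (N : ℂ) * eval b (th k (pT U L K)) =
       N * (K - 1) * (N * (K - M) * eval b (pT U L K)) := by
      rw [← h1, Finset.mul_sum]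
      refine Finset.sum_congr rfl fun k _ => ?_
      rw [Finset.sum_erase_eq_sub (Finset.mem_univ k)]
      simp; ring
    have e3 : ∑ k : Fin K, ∑ l ∈ Finset.univ.erase k, (N : ℂ) * eval b (th l (pT U L K)) =
       N * (K - 1) * (N * (K - M) * eval b (pT U L K)) := by
      rw [← h1]
      simp only [Finset.sum_erase_eq_sub (Finset.mem_univ _), Finset.sum_sub_distrib, ← Finset.mul_sum]
      simp; ring
    have e4 : ∑ k : Fin K, ∑ l ∈ Finset.univ.erase k, (N * (N + 1) * eval b (pT U L K)) =
       K * (K - 1) * (N * (N + 1) * eval b (pT U L K)) := by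
      simp only [Finset.sum_erase_eq_sub (Finset.mem_univ _), Finset.sum_sub_distrib]
      simp; ring
    rw [e1, e2, e3, e4] at h2
    have hs : ∀ k, eval b (th k (pV K)) * eval b (th k (pT U L K)) = eval b (th k (pV K)) * (fun k => eval b (th k (pT U L K))) k := fun k => rfl
    rw [hc]
    linear_combination (- eval b (pV K)) * h2
  have := (mul_eq_zero.mp key).resolve_right pV_ne
  exact sub_eq_zero.mp this

end
end ACR


namespace ACR

section
variable {K : ℕ}
open MvPolynomial

/-- exponents of the minor -/
def nu0 (N M j : ℕ) : ℕ := if j < M then j else j + N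

theorem nu0_sum1 (N M H : ℕ) : ∑ j ∈ Finset.range (M + H), (nu0 N M j : ℂ) =
    ∑ j ∈ Finset.range (M + H), (j : ℂ) + N * ((M + H : ℕ) - M) := by
  induction H with
  | zero =>
    simp
    refine Finset.sum_congr rfl fun j hj => ?_
    rw [nu0, if_pos (by simpa using hj)]
  | succ H ih =>
    rw [← add_assoc, Finset.sum_range_succ, Finset.sum_range_succ, ih, nu0, if_neg (by omega)]
    push_cast; ring

theorem nu0_sum2 (N M H : ℕ) : ∑ j ∈ Finset.range (M + H), (nu0 N M j : ℂ) ^ 2 =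
    ∑ j ∈ Finset.range (M + H), (j : ℂ) ^ 2 +
      N * ((M + H : ℕ) * ((M + H : ℕ) - 1) - M * (M - 1)) + N ^ 2 * ((M + H : ℕ) - M) := by
  induction H with
  | zero =>
    simp
    refine Finset.sum_congr rfl fun j hj => ?_
    rw [nu0, if_pos (by simpa using hj)]
  | succ H ih =>
    rw [← add_assoc, Finset.sum_range_succ, Finset.sum_range_succ, ih, nu0, if_neg (by omega)]
    push_cast; ring

theorem nu0_inj (N M : ℕ) : Function.Injective (nu0 N M) := by
  intro i j h
  unfold nu0 at h
  split_ifs at h <;> omega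

theorem nu0_lt (N M K j : ℕ) (hj : j < K) (h : M ≤ K) : nu0 N M j < N + K := by
  unfold nu0; split_ifs <;> omega

theorem comb_lemma (N M : ℕ) (hN : 1 ≤ N) (hM : M ≤ K) (ν : Fin K → ℕ) (hi : Function.Injective ν)
    (hb : ∀ k, ν k < N + K) (h1 : ∑ k, (ν k : ℤ) = ∑ k : Fin K, (nu0 N M k : ℤ))
    (h2 : ∑ k, (ν k : ℤ) ^ 2 = ∑ k : Fin K, (nu0 N M k : ℤ) ^ 2) :
    Finset.univ.image ν = Finset.univ.image (fun k : Fin K => nu0 N M k) := by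
  set S := Finset.univ.image ν with hS
  set I := Finset.univ.image (fun k : Fin K => nu0 N M k) with hI
  have hi0 : Function.Injective (fun k : Fin K => nu0 N M k) := (nu0_inj N M).comp Fin.val_injective
  have cS : S.card = K := by rw [hS, Finset.card_image_of_injective _ hi]; simp
  have cI : I.card = K := by rw [hI, Finset.card_image_of_injective _ hi0]; simp
  let w : ℕ → ℤ := fun t => ((t : ℤ) - M) * (t - (M + N - 1))
  have sw : ∑ t ∈ S, w t = ∑ t ∈ I, w t := by
    rw [hS, hI, Finset.sum_image (fun _ _ _ _ h => hi h), Finset.sum_image (fun _ _ _ _ h => hi0 h)]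
    have e : ∀ t : ℕ, w t = (t : ℤ) ^ 2 - (2 * M + N - 1) * t + M * (M + N - 1) := by intro t; simp only [w]; ring
    simp only [e, Finset.sum_add_distrib, Finset.sum_sub_distrib, ← Finset.mul_sum, h1, h2]
  have sd : ∑ t ∈ S \ I, w t = ∑ t ∈ I \ S, w t := by
    have a1 := Finset.sum_inter_add_sum_sdiff S I w
    have a2 := Finset.sum_inter_add_sum_sdiff I S w
    rw [Finset.inter_comm] at a2
    linarith
  have n1 : ∑ t ∈ S \ I, w t ≤ 0 := by
    apply Finset.sum_nonpos
    intro t ht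
    rw [Finset.mem_sdiff] at ht
    obtain ⟨k, -, rfl⟩ := Finset.mem_image.mp ht.1
    have hb' := hb k
    have hn : ∀ j, j < K → nu0 N M j ≠ ν k := by
      intro j hj e
      exact ht.2 (Finset.mem_image.mpr ⟨⟨j, hj⟩, Finset.mem_univ _, e⟩)
    have l1 : M ≤ ν k := by
      by_contra hc
      exact hn (ν k) (by omega) (by rw [nu0, if_pos (by omega)])
    have l2 : ν k < M + N := by
      by_contra hc
      exact hn (ν k - N) (by omega) (by rw [nu0, if_neg (by omega)]; omega)
    apply mul_nonpos_of_nonneg_of_nonpos <;> [skip; skip] <;> omega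
  have n2 : I ⊆ S := by
    rw [← Finset.sdiff_eq_empty_iff_subset]
    by_contra hne
    have : 0 < ∑ t ∈ I \ S, w t := by
      apply Finset.sum_pos _ (Finset.nonempty_iff_ne_empty.mpr hne)
      intro t ht
      rw [Finset.mem_sdiff] at ht
      obtain ⟨k, -, rfl⟩ := Finset.mem_image.mp ht.1
      simp only [w, nu0]
      have := k.2
      split_ifs with hc
      · apply mul_pos_of_neg_of_neg <;> push_cast <;> omega
      · apply mul_pos <;> push_cast <;> omega
    linarith
  exact (Finset.eq_of_subset_of_card_le n2 (by omega)).symm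

theorem exists_perm (ν μ : Fin K → ℕ) (hν : Function.Injective ν) (hμ : Function.Injective μ)
    (h : Finset.univ.image ν = Finset.univ.image μ) : ∃ σ : Equiv.Perm (Fin K), ν = μ ∘ σ := by
  have : ∀ k, ∃ l, μ l = ν k := by
    intro k
    have : ν k ∈ Finset.univ.image μ := h ▸ Finset.mem_image_of_mem _ (Finset.mem_univ k)
    obtain ⟨l, -, hl⟩ := Finset.mem_image.mp this
    exact ⟨l, hl⟩
  choose f hf using this
  have hfi : Function.Injective f := by
    intro a b hab
    apply hν
    rw [← hf, ← hf, hab]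
  refine ⟨Equiv.ofBijective f (Finite.injective_iff_bijective.mp hfi), ?_⟩
  funext k
  exact (hf k).symm

/-- antisymmetric polynomials -/
def Anti (p : MvPolynomial (Fin K) ℂ) : Prop :=
  ∀ σ : Equiv.Perm (Fin K), rename σ p = C (((Equiv.Perm.sign σ : ℤˣ) : ℤ) : ℂ) * p

theorem anti_gdet (ν0 : Fin K → ℕ) : Anti (gdet ν0) := by
  intro σ
  have := Matrix.det_permute σ (Matrix.of fun i j => (X i : MvPolynomial (Fin K) ℂ) ^ ν0 j)
  rw [gdet]
  have e : (C (((Equiv.Perm.sign σ : ℤˣ) : ℤ) : ℂ) : MvPolynomial (Fin K) ℂ) = ((Equiv.Perm.sign σ : ℤˣ) : ℤ) := by simp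
  rw [e, ← this]
  rw [AlgHom.map_det]
  congr 1
  ext i j
  simp

theorem anti_coeff {p : MvPolynomial (Fin K) ℂ} (hp : Anti p) (σ : Equiv.Perm (Fin K)) (ν : Fin K → ℕ) :
    coeff (ev ν) p = (((Equiv.Perm.sign σ : ℤˣ) : ℤ) : ℂ) * coeff (ev (ν ∘ σ.symm)) p := by
  have h := coeff_rename_mapDomain σ σ.injective p (ev ν)
  rw [hp σ, coeff_C_mul] at h
  rw [← h]
  congr 2
  ext k
  rw [Finsupp.mapDomain_equiv_apply]
  rfl

theorem anti_inj {p : MvPolynomial (Fin K) ℂ} (hp : Anti p) (ν : Fin K → ℕ) (h : coeff (ev ν) p ≠ 0) :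
    Function.Injective ν := by
  intro k l hkl
  by_contra hne
  have h1 := anti_coeff hp (Equiv.swap k l) ν
  rw [Equiv.Perm.sign_swap hne] at h1
  have : ν ∘ (Equiv.swap k l).symm = ν := by
    funext i
    simp only [Function.comp, Equiv.symm_swap, Equiv.swap_apply_def]
    split_ifs <;> simp_all
  rw [this] at h1
  apply h
  simp at h1
  exact self_eq_neg.mp h1

variable {A : Type*} [CommRing A] [Algebra ℂ A] {N : ℕ}

theorem sym_pT (U : Matrix (Fin N) (Fin N) A) (L : A →ₗ[ℂ] ℂ) (σ : Equiv.Perm (Fin K)) :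
    rename σ (pT U L K) = pT U L K := by
  apply MvPolynomial.funext
  intro b
  rw [eval_rename, eval_pT, eval_pT, ← Equiv.prod_comp σ (fun k => cX U (b k))]
  rfl

theorem anti_Q (U : Matrix (Fin N) (Fin N) A) (L : A →ₗ[ℂ] ℂ) : Anti (pV K * pT U L K) := by
  intro σ
  rw [map_mul, sym_pT, pV, anti_gdet, mul_assoc]

theorem deg_pT [Nontrivial A] (U : Matrix (Fin N) (Fin N) A) (L : A →ₗ[ℂ] ℂ) (k : Fin K) :
    degreeOf k (pT U L K) ≤ N := by
  rw [degreeOf_le_iff]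
  intro ν hν
  rw [mem_support_iff, pT, coeff_ML] at hν
  have h1 : coeff ν (pA U Finset.univ) ≠ 0 := by intro h; rw [h] at hν; simp at hν
  have h2 := (degreeOf_le_iff (n := k) (d := degreeOf k (pA U (Finset.univ : Finset (Fin K))))).mp le_rfl ν (mem_support_iff.mpr h1)
  refine h2.trans ?_
  rw [pA]
  refine (degreeOf_prod_le _ _ _).trans ?_
  have : ∀ l, degreeOf k (Polynomial.aeval (X l : MvPolynomial (Fin K) A) U.charpoly) ≤ if k = l then N else 0 := by
    intro l
    rw [Polynomial.aeval_eq_sum_range]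
    refine (degreeOf_sum_le _ _ _).trans ?_
    apply Finset.sup_le
    intro i hi
    rw [charpoly_natDegree_eq_dim, Fintype.card_fin, Finset.mem_range] at hi
    rw [smul_eq_C_mul]
    refine (degreeOf_C_mul_le _ _ _).trans ?_
    refine (degreeOf_pow_le _ _ _).trans ?_
    rw [degreeOf_X]
    split_ifs <;> omega
  refine (Finset.sum_le_sum fun l _ => this l).trans ?_
  simp

theorem deg_pV (k : Fin K) : degreeOf k (pV K) ≤ K - 1 := by
  rw [degreeOf_le_iff]
  intro ν hν
  rw [mem_support_iff, pV, gdet_eq, coeff_sum] at hν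
  obtain ⟨σ, -, hσ⟩ := Finset.exists_ne_zero_of_sum_ne_zero hν
  rw [coeff_monomial] at hσ
  have : ev ((fun j : Fin K => (j : ℕ)) ∘ σ.symm) = ν := by
    by_contra h; rw [if_neg h] at hσ; exact hσ rfl
  rw [← this]
  change ((σ.symm k : Fin K) : ℕ) ≤ _
  omega

theorem Q_coeff [Nontrivial A] {U : Matrix (Fin N) (Fin N) A} {L : A →ₗ[ℂ] ℂ} {M : ℕ} (h : EqInv U L M) (hN : 1 ≤ N) (hM : M ≤ K)
    (ν : Fin K → ℕ) (hν : coeff (ev ν) (pV K * pT U L K) ≠ 0) :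
    ∃ σ : Equiv.Perm (Fin K), ν = (fun k : Fin K => nu0 N M k) ∘ σ := by
  have hi := anti_inj (anti_Q U L) ν hν
  apply exists_perm _ _ hi ((nu0_inj N M).comp Fin.val_injective)
  obtain ⟨H, rfl⟩ := Nat.exists_eq_add_of_le hM
  apply comb_lemma N M hN hM ν hi
  · intro k
    have h1 := (degreeOf_le_iff (n := k) (d := degreeOf k (pV (M + H) * pT U L (M + H)))).mp le_rfl _ (mem_support_iff.mpr hν)
    have h2 := degreeOf_mul_le k (pV (M + H)) (pT U L (M + H))
    have h3 := deg_pV k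
    have h4 := deg_pT U L k
    have : (ev ν) k = ν k := rfl
    have := k.2
    omega
  · have := congrArg (coeff (ev ν)) (D1_Q (K := M + H) h)
    rw [coeff_sum, coeff_C_mul] at this
    simp only [coeff_th, ← Finset.sum_mul] at this
    have := mul_right_cancel₀ hν this
    rw [Fin.sum_univ_eq_sum_range (fun i => (i : ℂ)), ← nu0_sum1, ← Fin.sum_univ_eq_sum_range (fun i => (nu0 N M i : ℂ))] at this
    have : ∑ k, (ν k : ℂ) = _ := this
    exact_mod_cast this
  · have := congrArg (coeff (ev ν)) (D2_Q (K := M + H) h)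
    rw [coeff_sum, coeff_C_mul] at this
    simp only [coeff_th, ← mul_assoc, ← Finset.sum_mul] at this
    have := mul_right_cancel₀ hν this
    rw [Fin.sum_univ_eq_sum_range (fun i => (i : ℂ) ^ 2), ← nu0_sum2, ← Fin.sum_univ_eq_sum_range (fun i => (nu0 N M i : ℂ) ^ 2)] at this
    have : ∑ k, (ν k : ℂ) * (ν k : ℂ) = _ := this
    simp only [← sq] at this
    exact_mod_cast this

theorem Q_eq [Nontrivial A] {U : Matrix (Fin N) (Fin N) A} {L : A →ₗ[ℂ] ℂ} {M : ℕ} (h : EqInv U L M) (hN : 1 ≤ N) (hM : M ≤ K) :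
    ∃ c : ℂ, pV K * pT U L K = C c * gdet (fun k : Fin K => nu0 N M k) := by
  set ν0 := (fun k : Fin K => nu0 N M k) with hν0
  have hi0 : Function.Injective ν0 := (nu0_inj N M).comp Fin.val_injective
  refine ⟨coeff (ev ν0) (pV K * pT U L K), ?_⟩
  have hg : ∀ ν : Fin K → ℕ, coeff (ev ν) (gdet ν0) = ∑ σ : Equiv.Perm (Fin K), if ν0 ∘ σ.symm = ν then (((Equiv.Perm.sign σ : ℤˣ) : ℤ) : ℂ) else 0 := by
    intro ν
    rw [gdet_eq, coeff_sum]
    refine Finset.sum_congr rfl fun σ _ => ?_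
    rw [coeff_monomial]
    congr 1
    simp [ev]
  have hg0 : coeff (ev ν0) (gdet ν0) = 1 := by
    rw [hg, Finset.sum_eq_single 1]
    · simp
      rfl
    · intro σ _ hσ
      rw [if_neg]
      intro hc
      apply hσ
      ext k
      have := hi0 (congrFun hc (σ k))
      simp at this
      rw [← this]; simp
    · simp
  ext ν
  obtain ⟨ν, rfl⟩ : ∃ μ, ν = ev μ := ⟨ν, by ext; rfl⟩
  rw [coeff_C_mul]
  by_cases ho : ∃ σ : Equiv.Perm (Fin K), ν = ν0 ∘ σ
  · obtain ⟨σ, rfl⟩ := ho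
    have a1 := anti_coeff (anti_Q (K := K) U L) σ (ν0 ∘ σ)
    have a2 := anti_coeff (anti_gdet ν0) σ (ν0 ∘ σ)
    have e : (ν0 ∘ σ) ∘ σ.symm = ν0 := by funext; simp
    rw [e] at a1 a2
    rw [a1, a2, hg0]; ring
  · have z1 : coeff (ev ν) (pV K * pT U L K) = 0 := by
      by_contra hc
      exact ho (Q_coeff h hN hM ν hc)
    rw [z1, hg, Finset.sum_eq_zero, mul_zero]
    intro σ _
    rw [if_neg]
    intro hc
    exact ho ⟨σ.symm, hc.symm⟩

end
end ACR


namespace ACR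

section
open Polynomial

/-- Toeplitz matrix of a polynomial -/
noncomputable def toep {R : Type*} [CommRing R] (P : R[X]) (M N : ℕ) : Matrix (Fin N) (Fin N) R :=
  Matrix.of fun i j => (X ^ (i : ℕ) * P).coeff (M + j)

theorem toep_det_map {R S : Type*} [CommRing R] [CommRing S] (f : R →+* S) (P : R[X]) (M N : ℕ) :
    f (toep P M N).det = (toep (P.map f) M N).det := by
  rw [RingHom.map_det]
  congr 1
  ext i j
  simp only [toep, RingHom.mapMatrix_apply, Matrix.map_apply, Matrix.of_apply]
  rw [← coeff_map, Polynomial.map_mul, Polynomial.map_pow, map_X]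

/-- row exponents -/
def rho (N M K : ℕ) : Fin N ⊕ Fin K → ℕ := Sum.elim (fun j => M + j) (fun k => nu0 N M k)
/-- standard row exponents -/
def rho' (N K : ℕ) : Fin N ⊕ Fin K → ℕ := Sum.elim (fun j => K + j) (fun k => k)

theorem rho_equiv (N M K : ℕ) (h : M ≤ K) : ∃ r : Fin N ⊕ Fin K ≃ Fin (N + K), ∀ x, (r x : ℕ) = rho N M K x := by
  have hlt : ∀ x, rho N M K x < N + K := by
    rintro (j | k)
    · simp [rho]; omega
    · exact nu0_lt _ _ _ _ k.2 h
  have hb : Function.Bijective (fun x => (⟨rho N M K x, hlt x⟩ : Fin (N + K))) := by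
    rw [Fintype.bijective_iff_injective_and_card]
    refine ⟨?_, by simp⟩
    rintro (i | i) (j | j) hij <;> simp [rho, nu0] at hij
    · rw [Fin.ext hij]
    · split_ifs at hij <;> omega
    · split_ifs at hij <;> omega
    · have : i = j := by
        apply Fin.ext
        split_ifs at hij <;> omega
      rw [this]
  exact ⟨Equiv.ofBijective _ hb, fun x => rfl⟩

theorem rho'_equiv (N K : ℕ) : ∃ r : Fin N ⊕ Fin K ≃ Fin (N + K), ∀ x, (r x : ℕ) = rho' N K x := by
  obtain ⟨r, hr⟩ := rho_equiv N K K le_rfl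
  refine ⟨r, fun x => ?_⟩
  rw [hr]
  rcases x with j | k
  · rfl
  · simp [rho, rho', nu0]

theorem minor_identity (N M K : ℕ) (h : M ≤ K) : ∃ ε : ℤˣ, ∀ {R : Type} [CommRing R] (b : Fin K → R),
    det (Matrix.of fun i j : Fin K => b i ^ nu0 N M j) =
      ((ε : ℤ) : R) * (det (vandermonde b) * (toep (∏ k, (X - C (b k))) M N).det) := by
  obtain ⟨r, hr⟩ := rho_equiv N M K h
  obtain ⟨r', hr'⟩ := rho'_equiv N K
  refine ⟨Equiv.Perm.sign (r.trans r'.symm), ?_⟩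
  intro R _ b
  rcases subsingleton_or_nontrivial R with hs | hs
  · exact Subsingleton.elim _ _
  set P := ∏ k, (X - C (b k)) with hP
  have hPm : P.Monic := monic_prod_of_monic _ _ fun k _ => monic_X_sub_C _
  have hPd : P.natDegree = K := by rw [hP, natDegree_prod_of_monic _ _ fun k _ => monic_X_sub_C _]; simp
  have hPr : ∀ k, P.eval (b k) = 0 := by
    intro k; rw [hP, eval_prod]; exact Finset.prod_eq_zero (Finset.mem_univ k) (by simp)
  let B : Matrix (Fin N) (Fin N ⊕ Fin K) R := Matrix.of fun i x => (X ^ (i : ℕ) * P).coeff (rho N M K x)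
  let Y' : Matrix (Fin N ⊕ Fin K) (Fin N ⊕ Fin K) R := Matrix.of fun x y =>
    Sum.elim (fun j : Fin N => if rho' N K x = K + j then 1 else 0) (fun k => b k ^ rho' N K x) y
  let Y : Matrix (Fin N ⊕ Fin K) (Fin N ⊕ Fin K) R := Matrix.of fun x y =>
    Sum.elim (fun j : Fin N => if rho N M K x = K + j then 1 else 0) (fun k => b k ^ rho N M K x) y
  have hYY : Y = Y'.submatrix (r.trans r'.symm) id := by
    ext x y
    have : rho N M K x = rho' N K (r'.symm (r x)) := by rw [← hr', ← hr]; simp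
    simp [Y, Y', this]
  have dY : Y.det = ((Equiv.Perm.sign (r.trans r'.symm) : ℤˣ) : ℤ) * Y'.det := by
    rw [hYY, det_permute]
  have dY' : Y'.det = det (vandermonde b) := by
    have : Y' = fromBlocks 1 (Matrix.of fun (j : Fin N) k => b k ^ (K + (j : ℕ))) 0 (vandermonde b)ᵀ := by
      ext x y
      rcases x with i | i <;> rcases y with j | j <;>
        simp [Y', rho', vandermonde_apply, Matrix.one_apply, Fin.ext_iff]
      exact if_neg (by have := i.2; change ¬ ((i : ℕ) = K + (j : ℕ)); omega)
    rw [this, det_fromBlocks_zero₂₁, det_one, one_mul, det_transpose]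
  let S : Matrix (Fin N ⊕ Fin K) (Fin N ⊕ Fin K) R := fromBlocks (B.submatrix id Sum.inl) (B.submatrix id Sum.inr) 0 1
  have dS : S.det = (toep P M N).det := by
    rw [det_fromBlocks_zero₂₁, det_one, mul_one]; rfl
  let Tr : Matrix (Fin N) (Fin N) R := Matrix.of fun i j => (X ^ (i : ℕ) * P).coeff (K + j)
  have dTr : Tr.det = 1 := by
    rw [det_of_lowerTriangular]
    · apply Finset.prod_eq_one
      intro i _
      simp only [Tr, Matrix.of_apply, coeff_X_pow_mul']
      rw [if_pos (by omega), show K + (i : ℕ) - i = P.natDegree by omega]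
      exact hPm
    · intro i j hij
      have hij : i < j := hij
      simp only [Tr, Matrix.of_apply, coeff_X_pow_mul']
      split_ifs
      · apply coeff_eq_zero_of_natDegree_lt
        have : (i : ℕ) < j := hij
        omega
      · rfl
  have sumE : ∀ f : ℕ → R, ∑ x, f (rho N M K x) = ∑ e ∈ Finset.range (N + K), f e := by
    intro f
    rw [← Fin.sum_univ_eq_sum_range, ← Equiv.sum_comp r]
    simp [hr]
  have BY1 : ∀ i (j : Fin N), ∑ x, B i x * Y x (Sum.inl j) = Tr i j := by
    intro i j
    have := sumE (fun e => (X ^ (i : ℕ) * P).coeff e * if e = K + j then 1 else 0)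
    simp only [B, Y, Matrix.of_apply, Sum.elim_inl]
    rw [this]
    simp [Tr]
    intro hh; omega
  have BY2 : ∀ i k, ∑ x, B i x * Y x (Sum.inr k) = 0 := by
    intro i k
    have := sumE (fun e => (X ^ (i : ℕ) * P).coeff e * b k ^ e)
    simp only [B, Y, Matrix.of_apply, Sum.elim_inr]
    rw [this, ← eval_eq_sum_range', eval_mul, hPr, mul_zero]
    refine lt_of_le_of_lt natDegree_mul_le ?_
    rw [natDegree_X_pow, hPd]; omega
  have SY : S * Y = fromBlocks Tr 0 (Matrix.of fun m (j : Fin N) => Y (Sum.inr m) (Sum.inl j))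
      (Matrix.of fun i j : Fin K => b i ^ nu0 N M j)ᵀ := by
    ext x y
    rw [Matrix.mul_apply]
    rcases x with i | m
    · have : ∀ z, S (Sum.inl i) z = B i z := by rintro (z | z) <;> rfl
      simp only [this]
      rcases y with j | k
      · rw [BY1]; rfl
      · rw [BY2]; rfl
    · rw [Fintype.sum_sum_type]
      have h1 : ∀ z, S (Sum.inr m) (Sum.inl z) = 0 := fun z => rfl
      have h2 : ∀ z, S (Sum.inr m) (Sum.inr z) = if m = z then 1 else 0 := fun z => by
        simp [S, Matrix.one_apply]
      simp only [h1, h2]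
      simp
      rcases y with j | k
      · rfl
      · rfl
  have := congrArg det SY
  rw [det_mul, det_fromBlocks_zero₁₂, dTr, one_mul, det_transpose, dS, dY, dY'] at this
  rw [← this]; ring

end
section
open MvPolynomial
variable {K : ℕ} {A : Type} [CommRing A] [Algebra ℂ A] [Nontrivial A] {N : ℕ}

theorem T_eq_toep {U : Matrix (Fin N) (Fin N) A} {L : A →ₗ[ℂ] ℂ} {M : ℕ} (h : EqInv U L M) (hN : 1 ≤ N) (hM : M ≤ K) :
    ∃ c : ℂ, ∀ b : Fin K → ℂ, L (∏ k, cX U (b k)) =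
      c * (toep (∏ k, (Polynomial.X - Polynomial.C (b k))) M N).det := by
  obtain ⟨c, hc⟩ := Q_eq (K := K) h hN hM
  obtain ⟨ε, hε⟩ := minor_identity N M K hM
  have h1 := hε (X : Fin K → MvPolynomial (Fin K) ℂ)
  rw [gdet, h1] at hc
  have hV : det (vandermonde (X : Fin K → MvPolynomial (Fin K) ℂ)) = pV K := by
    rw [pV_eq, det_vandermonde]
  rw [hV] at hc
  have h2 : pT U L K = C c * (((ε : ℤ) : MvPolynomial (Fin K) ℂ) *
      (toep (∏ k, (Polynomial.X - Polynomial.C (X k : MvPolynomial (Fin K) ℂ))) M N).det) := by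
    apply mul_left_cancel₀ (pV_ne (K := K))
    rw [hc]; ring
  refine ⟨c * (ε : ℤ), fun b => ?_⟩
  rw [← eval_pT, h2, map_mul, map_mul, eval_C, toep_det_map]
  simp [Polynomial.map_prod, mul_assoc]

end
end ACR



namespace ACR

section
variable {N : ℕ}

/-- abbreviation -/
abbrev UG (N : ℕ) := Matrix.unitaryGroup (Fin N) ℂ

instance : CompactSpace (UG N) := by
  have hc : IsCompact (Set.pi Set.univ (fun _ : Fin N => Set.pi Set.univ (fun _ : Fin N => Metric.closedBall (0 : ℂ) 1))) :=
    isCompact_univ_pi fun _ => isCompact_univ_pi fun _ => isCompact_closedBall _ _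
  suffices h : IsCompact (Matrix.unitaryGroup (Fin N) ℂ : Set (Matrix (Fin N) (Fin N) ℂ)) from
    isCompact_iff_compactSpace.mp h
  refine IsCompact.of_isClosed_subset hc ?_ ?_
  · have : (Matrix.unitaryGroup (Fin N) ℂ : Set (Matrix (Fin N) (Fin N) ℂ)) = {A | A * star A = 1} := by
      ext A; exact mem_unitaryGroup_iff
    change IsClosed (Matrix.unitaryGroup (Fin N) ℂ : Set (Matrix (Fin N) (Fin N) ℂ))
    rw [this]
    exact isClosed_eq (by fun_prop) continuous_const
  · intro A hA i _ j _
    simpa using entry_norm_bound_of_unitary hA i j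

/-- tautological matrix -/
noncomputable def tU (N : ℕ) : Matrix (Fin N) (Fin N) C(UG N, ℂ) :=
  Matrix.of fun i j => ⟨fun u => (u : Matrix (Fin N) (Fin N) ℂ) i j, Continuous.matrix_elem continuous_subtype_val i j⟩

theorem det_norm_one (u : UG N) : (u : Matrix (Fin N) (Fin N) ℂ).det * star (u : Matrix (Fin N) (Fin N) ℂ).det = 1 := by
  have := (mem_unitaryGroup_iff (A := (u : Matrix (Fin N) (Fin N) ℂ))).mp u.2
  have := congrArg det this
  rwa [det_mul, star_eq_conjTranspose, det_conjTranspose, det_one] at this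

variable (μ : Measure (UG N)) [μ.IsHaarMeasure] [IsProbabilityMeasure μ]

theorem integrable_of_cont {f : UG N → ℂ} (hf : Continuous f) : Integrable f μ :=
  hf.integrable_of_hasCompactSupport (HasCompactSupport.of_compactSpace f)

/-- functional -/
noncomputable def LL (M : ℕ) : C(UG N, ℂ) →ₗ[ℂ] ℂ where
  toFun f := ∫ u, star (u : Matrix (Fin N) (Fin N) ℂ).det ^ M * f u ∂μ
  map_add' f g := by
    simp only [ContinuousMap.add_apply, mul_add]
    rw [integral_add]
    · exact integrable_of_cont μ (by fun_prop)
    · exact integrable_of_cont μ (by fun_prop)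
  map_smul' c f := by
    simp only [ContinuousMap.smul_apply, smul_eq_mul, mul_left_comm _ c, RingHom.id_apply]
    rw [integral_const_mul]

theorem LL_apply (M : ℕ) (f) : LL μ M f = ∫ u, star (u : Matrix (Fin N) (Fin N) ℂ).det ^ M * f u ∂μ := rfl

theorem eqInv (M : ℕ) : EqInv (tU N) (LL μ M) M := by
  intro d hd
  let g : UG N := ⟨d, hd⟩
  let φ : C(UG N, UG N) := ⟨fun u => g * u, by fun_prop⟩
  refine ⟨ContinuousMap.compRightAlgHom ℂ ℂ φ, ?_, ?_⟩
  · ext i j u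
    simp [tU, Matrix.mul_apply, φ, g]
  · intro f
    rw [LL_apply, LL_apply, ← integral_const_mul]
    rw [← integral_mul_left_eq_self (fun u : UG N => d.det ^ M * (star (u : Matrix (Fin N) (Fin N) ℂ).det ^ M * f u)) g]
    refine integral_congr_ae (Filter.Eventually.of_forall fun u => ?_)
    simp only [ContinuousMap.compRightAlgHom_apply, ContinuousMap.comp_apply]
    have : φ u = g * u := rfl
    rw [this]
    simp only [Submonoid.coe_mul, det_mul, star_mul', mul_pow]
    have h1 := det_norm_one g
    have h2 : d.det ^ M * star d.det ^ M = 1 := by rw [← mul_pow]; rw [show d.det * star d.det = 1 from h1]; simp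
    have h3 : (g : Matrix (Fin N) (Fin N) ℂ) = d := rfl
    rw [h3]
    linear_combination (- star (u : Matrix (Fin N) (Fin N) ℂ).det ^ M * f (g * u)) * h2

theorem cX_apply (b : ℂ) (u : UG N) : cX (tU N) b u = det (scalar (Fin N) b - (u : Matrix (Fin N) (Fin N) ℂ)) := by
  rw [cX, chi_eval]
  let ev : C(UG N, ℂ) →ₐ[ℂ] ℂ := ContinuousMap.evalAlgHom ℂ ℂ u
  change ev _ = _
  rw [AlgHom.map_det]
  congr 1
  ext i j
  by_cases h : i = j
  · subst h; simp [ev, tU]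
  · simp [ev, tU, h]

theorem poly_of {A : Type*} [CommRing A] [Algebra ℂ A] (L : A →ₗ[ℂ] ℂ) (P : Polynomial A) :
    ∃ p : Polynomial ℂ, ∀ s : ℂ, p.eval s = L (P.eval (algebraMap ℂ A s)) := by
  refine ⟨∑ i ∈ P.support, Polynomial.monomial i (L (P.coeff i)), fun s => ?_⟩
  rw [Polynomial.eval_eq_sum (p := P), Polynomial.sum, map_sum]
  simp only [Polynomial.eval_finsetSum, Polynomial.eval_monomial]
  refine Finset.sum_congr rfl fun i _ => ?_
  rw [← map_pow, mul_comm (P.coeff i), ← Algebra.smul_def, map_smul, smul_eq_mul, mul_comm]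

theorem int_det_pow (H : ℕ) : ∫ u : UG N, det (1 + (u : Matrix (Fin N) (Fin N) ℂ)) ^ H ∂μ = 1 := by
  obtain ⟨p, hp⟩ := poly_of (LL μ 0) ((det (1 + (Polynomial.X : Polynomial C(UG N, ℂ)) • (tU N).map Polynomial.C)) ^ H)
  have hp2 : ∀ s : ℂ, p.eval s = ∫ u : UG N, det (1 + s • (u : Matrix (Fin N) (Fin N) ℂ)) ^ H ∂μ := by
    intro s
    rw [hp, LL_apply]
    refine integral_congr_ae (Filter.Eventually.of_forall fun u => ?_)
    simp only [pow_zero, one_mul]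
    let ev : C(UG N, ℂ) →+* ℂ := (ContinuousMap.evalAlgHom ℂ ℂ u : C(UG N, ℂ) →ₐ[ℂ] ℂ)
    change ev (Polynomial.evalRingHom _ _) = _
    rw [map_pow, map_pow, RingHom.map_det, RingHom.map_det]
    congr 2
    ext i j
    by_cases h : i = j
    · subst h; simp [ev, tU]; ring
    · simp [ev, tU, h]; ring
  have hconst : p = Polynomial.C (p.eval 1) := by
    apply Polynomial.eq_of_infinite_eval_eq
    refine unit_circle_infinite.mono ?_
    intro z hz
    have hz : z * star z = 1 := hz
    simp only [Set.mem_ofPred_eq, Polynomial.eval_C]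
    rw [hp2, hp2]
    have hmem : z • (1 : Matrix (Fin N) (Fin N) ℂ) ∈ unitaryGroup (Fin N) ℂ := by
      rw [mem_unitaryGroup_iff, star_smul, star_one, smul_mul_smul_comm, hz]; simp
    rw [← integral_mul_left_eq_self (fun u : UG N => det (1 + (1 : ℂ) • (u : Matrix (Fin N) (Fin N) ℂ)) ^ H) ⟨_, hmem⟩]
    refine integral_congr_ae (Filter.Eventually.of_forall fun u => ?_)
    simp
  have h1 : p.eval 0 = 1 := by rw [hp2]; simp
  have h2 : p.eval 1 = 1 := by
    rw [hconst] at h1; simpa using h1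
  rw [hp2] at h2
  simpa using h2

end
end ACR


namespace ACR

section
variable {N : ℕ}
variable (μ : Measure (UG N)) [μ.IsHaarMeasure] [IsProbabilityMeasure μ]

theorem toep_norm (M H : ℕ) :
    (toep ((Polynomial.X : Polynomial ℂ) ^ M * (Polynomial.X + 1) ^ H) M N).det = 1 := by
  have hij : ∀ i j : Fin N, toep ((Polynomial.X : Polynomial ℂ) ^ M * (Polynomial.X + 1) ^ H) M N i j =
      if (i : ℕ) ≤ j then ((Polynomial.X + 1 : Polynomial ℂ) ^ H).coeff (j - i : ℕ) else 0 := by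
    intro i j
    rw [toep, Matrix.of_apply, ← mul_assoc, ← pow_add, Polynomial.coeff_X_pow_mul']
    by_cases h : (i : ℕ) ≤ j
    · rw [if_pos (by omega), if_pos h]
      congr 1; omega
    · rw [if_neg (by omega), if_neg h]
  rw [det_of_upperTriangular]
  · apply Finset.prod_eq_one
    intro i _
    rw [hij, if_pos le_rfl, Nat.sub_self, Polynomial.coeff_zero_eq_eval_zero]
    simp
  · intro i j h
    have h : j < i := h
    rw [hij, if_neg (by simpa using h)]

theorem heine_prod (hN : 1 ≤ N) {K M : ℕ} (hM : M ≤ K) (b : Fin K → ℂ) :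
    ∫ u : UG N, star (u : Matrix (Fin N) (Fin N) ℂ).det ^ M *
      ∏ k, det (scalar (Fin N) (b k) - (u : Matrix (Fin N) (Fin N) ℂ)) ∂μ =
    (-1) ^ (N * K) * (toep (∏ k, (Polynomial.X - Polynomial.C (b k))) M N).det := by
  obtain ⟨c, hc⟩ := T_eq_toep (eqInv μ M) hN hM
  have hc' : ∀ b : Fin K → ℂ, ∫ u : UG N, star (u : Matrix (Fin N) (Fin N) ℂ).det ^ M *
      ∏ k, det (scalar (Fin N) (b k) - (u : Matrix (Fin N) (Fin N) ℂ)) ∂μ =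
      c * (toep (∏ k, (Polynomial.X - Polynomial.C (b k))) M N).det := by
    intro b
    rw [← hc, LL_apply]
    refine integral_congr_ae (Filter.Eventually.of_forall fun u => ?_)
    simp only [ContinuousMap.prod_apply, cX_apply]
  rw [hc']
  congr 1
  obtain ⟨H, rfl⟩ := Nat.exists_eq_add_of_le hM
  have h0 := hc' (Fin.append (fun _ : Fin M => 0) (fun _ : Fin H => -1))
  rw [Fin.prod_univ_add] at h0
  simp only [Fin.prod_univ_add, Fin.append_left, Fin.append_right, Finset.prod_const, Finset.card_univ, Fintype.card_fin] at h0
  have h1 : ∀ u : UG N, star (u : Matrix (Fin N) (Fin N) ℂ).det ^ M *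
      (det (scalar (Fin N) 0 - (u : Matrix (Fin N) (Fin N) ℂ)) ^ M *
        det (scalar (Fin N) (-1) - (u : Matrix (Fin N) (Fin N) ℂ)) ^ H) =
      (-1) ^ (N * (M + H)) * det (1 + (u : Matrix (Fin N) (Fin N) ℂ)) ^ H := by
    intro u
    have e1 : scalar (Fin N) (0 : ℂ) - (u : Matrix (Fin N) (Fin N) ℂ) = - (u : Matrix (Fin N) (Fin N) ℂ) := by simp
    have e2 : scalar (Fin N) (-1 : ℂ) - (u : Matrix (Fin N) (Fin N) ℂ) = - (1 + (u : Matrix (Fin N) (Fin N) ℂ)) := by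
      rw [map_neg, map_one]; abel
    rw [e1, e2, det_neg, det_neg, Fintype.card_fin]
    have := det_norm_one u
    have h2 : (u : Matrix (Fin N) (Fin N) ℂ).det ^ M * star (u : Matrix (Fin N) (Fin N) ℂ).det ^ M = 1 := by
      rw [← mul_pow, this, one_pow]
    rw [mul_pow, mul_pow, mul_add, pow_add, pow_mul, pow_mul]
    linear_combination (((-1:ℂ)^N)^M * ((-1)^N)^H * (det (1 + (u : Matrix (Fin N) (Fin N) ℂ))) ^ H) * h2
  simp only [h1] at h0
  rw [integral_const_mul, int_det_pow, map_zero, sub_zero, map_neg, sub_neg_eq_add, map_one, toep_norm] at h0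
  simpa using h0.symm

theorem toep_C_mul (a : ℂ) (P : Polynomial ℂ) (M : ℕ) :
    (toep (Polynomial.C a * P) M N).det = a ^ N * (toep P M N).det := by
  have : toep (Polynomial.C a * P) M N = a • toep P M N := by
    ext i j
    simp only [toep, Matrix.of_apply, Matrix.smul_apply, smul_eq_mul]
    rw [mul_left_comm, Polynomial.coeff_C_mul]
  rw [this, det_smul, Fintype.card_fin]

theorem heine (hN : 1 ≤ N) {M : ℕ} (P : Polynomial ℂ) (hM : M ≤ P.natDegree) :
    ∫ u : UG N, star (u : Matrix (Fin N) (Fin N) ℂ).det ^ M *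
      det (Polynomial.aeval (u : Matrix (Fin N) (Fin N) ℂ) P) ∂μ = (toep P M N).det := by
  have hs : P.Splits := IsAlgClosed.splits P
  have hcard : P.roots.card = P.natDegree := (Polynomial.splits_iff_card_roots.mp hs)
  obtain ⟨l, hl⟩ : ∃ l : List ℂ, (l : Multiset ℂ) = P.roots := ⟨P.roots.toList, by simp⟩
  have hlen : l.length = P.natDegree := by rw [← hcard, ← hl]; simp
  have hP : P = Polynomial.C P.leadingCoeff * ∏ k : Fin l.length, (Polynomial.X - Polynomial.C (l.get k)) := by
    conv_lhs => rw [hs.eq_prod_roots, ← hl]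
    congr 1
    rw [Multiset.map_coe, Multiset.prod_coe, ← List.prod_ofFn]
    congr 1
    apply List.ext_get <;> simp
  have hh := heine_prod μ hN (hlen ▸ hM) l.get
  have key : ∀ u : UG N, star (u : Matrix (Fin N) (Fin N) ℂ).det ^ M *
      det (Polynomial.aeval (u : Matrix (Fin N) (Fin N) ℂ) P) =
      P.leadingCoeff ^ N * (-1) ^ (N * l.length) * (star (u : Matrix (Fin N) (Fin N) ℂ).det ^ M *
      ∏ k, det (scalar (Fin N) (l.get k) - (u : Matrix (Fin N) (Fin N) ℂ))) := by
    intro u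
    conv_lhs => rw [hP]
    have hdet : ∀ (Q : Polynomial ℂ) , det (Polynomial.aeval (u : Matrix (Fin N) (Fin N) ℂ) Q) =
      (detMonoidHom.comp (Polynomial.aeval (R := ℂ) (u : Matrix (Fin N) (Fin N) ℂ)).toRingHom.toMonoidHom) Q := fun _ => rfl
    rw [hdet, map_mul, map_prod, ← hdet]
    simp only [← hdet]
    have e1 : det (Polynomial.aeval (u : Matrix (Fin N) (Fin N) ℂ) (Polynomial.C P.leadingCoeff)) = P.leadingCoeff ^ N := by
      rw [Polynomial.aeval_C, Algebra.algebraMap_eq_smul_one, det_smul, det_one, Fintype.card_fin, mul_one]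
    have e2 : ∀ k, det (Polynomial.aeval (u : Matrix (Fin N) (Fin N) ℂ) (Polynomial.X - Polynomial.C (l.get k))) =
       (-1) ^ N * det (scalar (Fin N) (l.get k) - (u : Matrix (Fin N) (Fin N) ℂ)) := by
      intro k
      have : Polynomial.aeval (u : Matrix (Fin N) (Fin N) ℂ) (Polynomial.X - Polynomial.C (l.get k)) = 
         - (scalar (Fin N) (l.get k) - (u : Matrix (Fin N) (Fin N) ℂ)) := by
        rw [map_sub, Polynomial.aeval_X, Polynomial.aeval_C, neg_sub]
        rfl
      rw [this, det_neg, Fintype.card_fin]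
    rw [e1]
    simp only [e2]
    rw [Finset.prod_mul_distrib, Finset.prod_const, Finset.card_univ, Fintype.card_fin, ← pow_mul]
    ring
  simp only [key]
  rw [integral_const_mul, hh]
  conv_rhs => rw [hP, toep_C_mul]
  have : ((-1 : ℂ) ^ (N * l.length)) * (-1) ^ (N * l.length) = 1 := by
    rw [← mul_pow]; simp
  linear_combination (P.leadingCoeff ^ N * (toep (∏ k : Fin l.length, (Polynomial.X - Polynomial.C (l.get k))) M N).det) * this

end
end ACR


namespace ACR

section
variable {N : ℕ}

/-- geometric partial determinant -/
noncomputable def geo (c : ℂ) (v : UG N) (R : ℕ) : ℂ :=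
  det (∑ r ∈ Finset.range R, (c • (v : Matrix (Fin N) (Fin N) ℂ)) ^ r)

theorem geo_mul (c : ℂ) (v : UG N) (R : ℕ) :
    geo c v R * det (1 - c • (v : Matrix (Fin N) (Fin N) ℂ)) = det (1 - (c • (v : Matrix (Fin N) (Fin N) ℂ)) ^ R) := by
  rw [geo, ← det_mul, geom_sum_mul_neg]

theorem pow_entry (c : ℂ) (v : UG N) (r : ℕ) (i j : Fin N) :
    ‖((c • (v : Matrix (Fin N) (Fin N) ℂ)) ^ r) i j‖ ≤ ‖c‖ ^ r := by
  rw [smul_pow, Matrix.smul_apply, norm_smul, norm_pow]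
  have : ‖((v : Matrix (Fin N) (Fin N) ℂ) ^ r) i j‖ ≤ 1 := by
    have := entry_norm_bound_of_unitary (v ^ r).2 i j
    simpa using this
  exact mul_le_of_le_one_right (by positivity) this

theorem tend_one {c : ℂ} (hc : ‖c‖ < 1) (v : UG N) :
    Filter.Tendsto (fun R => det (1 - (c • (v : Matrix (Fin N) (Fin N) ℂ)) ^ R)) Filter.atTop (nhds 1) := by
  have h0 : Filter.Tendsto (fun R => (c • (v : Matrix (Fin N) (Fin N) ℂ)) ^ R) Filter.atTop (nhds 0) := by
    refine tendsto_pi_nhds.mpr fun i => ?_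
    refine tendsto_pi_nhds.mpr fun j => ?_
    refine squeeze_zero_norm (pow_entry c v · i j) ?_
    exact tendsto_pow_atTop_nhds_zero_of_lt_one (norm_nonneg _) hc
  have h1 : Continuous (fun A : Matrix (Fin N) (Fin N) ℂ => det (1 - A)) := by fun_prop
  have := (h1.tendsto 0).comp h0
  simpa [Function.comp_def] using this

theorem det_ne {c : ℂ} (hc : ‖c‖ < 1) (v : UG N) : det (1 - c • (v : Matrix (Fin N) (Fin N) ℂ)) ≠ 0 := by
  intro h
  have h1 := tend_one hc v
  simp only [← geo_mul, h, mul_zero] at h1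
  exact zero_ne_one (tendsto_nhds_unique tendsto_const_nhds h1)

theorem geo_tendsto {c : ℂ} (hc : ‖c‖ < 1) (v : UG N) :
    Filter.Tendsto (geo c v) Filter.atTop (nhds (det (1 - c • (v : Matrix (Fin N) (Fin N) ℂ)))⁻¹) := by
  have h1 := (tend_one hc v).mul_const (det (1 - c • (v : Matrix (Fin N) (Fin N) ℂ)))⁻¹
  rw [one_mul] at h1
  refine h1.congr fun R => ?_
  rw [← geo_mul, mul_assoc, mul_inv_cancel₀ (det_ne hc v), mul_one]

theorem geo_bound {c : ℂ} (hc : ‖c‖ < 1) (v : UG N) (R : ℕ) :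
    ‖geo c v R‖ ≤ N.factorial • ((1 - ‖c‖)⁻¹) ^ N := by
  have := Matrix.det_le (A := ∑ r ∈ Finset.range R, (c • (v : Matrix (Fin N) (Fin N) ℂ)) ^ r)
    (abv := IsAbsoluteValue.toAbsoluteValue (norm : ℂ → ℝ)) (x := (1 - ‖c‖)⁻¹) ?_
  · simpa [geo] using this
  · intro i j
    change ‖(∑ r ∈ Finset.range R, (c • (v : Matrix (Fin N) (Fin N) ℂ)) ^ r) i j‖ ≤ _
    rw [Matrix.sum_apply]
    refine (norm_sum_le _ _).trans ?_
    refine (Finset.sum_le_sum fun r _ => pow_entry c v r i j).trans ?_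
    rw [← tsum_geometric_of_lt_one (norm_nonneg _) hc]
    exact (summable_geometric_of_lt_one (norm_nonneg _) hc).sum_le_tsum _ (fun _ _ => by positivity)

theorem geo_cont (c : ℂ) (R : ℕ) : Continuous (fun v : UG N => geo c v R) := by
  unfold geo
  fun_prop

variable {ι : Type*} (a x y : ι → ℂ) (A B C : Finset ι)

/-- approximating polynomial -/
noncomputable def PR (R : ℕ) : Polynomial ℂ :=
  (∏ k ∈ A, (1 - Polynomial.C (a k) * Polynomial.X)) *
  (∏ j ∈ B, ∑ r ∈ Finset.range (R + 1), (Polynomial.C (x j) * Polynomial.X) ^ r) *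
  (∏ l ∈ C, ∑ r ∈ Finset.range (R + 1), Polynomial.C (y l ^ r) * Polynomial.X ^ (R - r))

theorem deg_y (b : ℂ) (R : ℕ) :
    R ≤ (∑ r ∈ Finset.range (R + 1), Polynomial.C (b ^ r) * Polynomial.X ^ (R - r)).natDegree := by
  apply Polynomial.le_natDegree_of_ne_zero
  rw [Polynomial.finsetSum_coeff, Finset.sum_eq_single 0]
  · simp
  · intro r hr hr0
    rw [Polynomial.coeff_C_mul_X_pow, if_neg]
    simp only [Finset.mem_range] at hr
    omega
  · simp

theorem deg_x (b : ℂ) (R : ℕ) :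
    (∑ r ∈ Finset.range (R + 1), (Polynomial.C b * Polynomial.X) ^ r) ≠ 0 := by
  intro h
  have := congrArg (Polynomial.eval 0) h
  simp [Polynomial.eval_finsetSum, Finset.sum_range_succ'] at this

theorem deg_a {b : ℂ} (hb : b ≠ 0) : (1 - Polynomial.C b * Polynomial.X : Polynomial ℂ).natDegree = 1 := by
  have : (1 - Polynomial.C b * Polynomial.X : Polynomial ℂ) = Polynomial.C (-b) * Polynomial.X + Polynomial.C 1 := by
    simp; ring
  rw [this, Polynomial.natDegree_linear (neg_ne_zero.mpr hb)]

theorem PR_deg (ha : ∀ k ∈ A, a k ≠ 0) (hAC : C.card ≤ A.card) (R : ℕ) :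
    C.card * (R + 1) ≤ (PR a x y A B C R).natDegree := by
  have ha0 : ∀ k ∈ A, (1 - Polynomial.C (a k) * Polynomial.X : Polynomial ℂ) ≠ 0 := by
    intro k hk h
    have := deg_a (ha k hk)
    rw [h] at this; simp at this
  have hx0 : ∀ j ∈ B, (∑ r ∈ Finset.range (R + 1), (Polynomial.C (x j) * Polynomial.X) ^ r) ≠ 0 := fun j _ => deg_x _ _
  have hy0 : ∀ l ∈ C, (∑ r ∈ Finset.range (R + 1), Polynomial.C (y l ^ r) * Polynomial.X ^ (R - r)) ≠ 0 := by
    intro l _ h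
    have := congrArg (fun P => Polynomial.coeff P R) h
    beta_reduce at this
    rw [Polynomial.finsetSum_coeff, Finset.sum_eq_single 0] at this
    · simp at this
    · intro r hr hr0
      rw [Polynomial.coeff_C_mul_X_pow, if_neg]
      simp only [Finset.mem_range] at hr
      omega
    · simp
  have pA := Finset.prod_ne_zero_iff.mpr ha0
  have pB := Finset.prod_ne_zero_iff.mpr hx0
  have pC := Finset.prod_ne_zero_iff.mpr hy0
  rw [PR, Polynomial.natDegree_mul (mul_ne_zero pA pB) pC, Polynomial.natDegree_mul pA pB,
    Polynomial.natDegree_prod _ _ ha0, Polynomial.natDegree_prod _ _ hy0,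
    Finset.sum_congr rfl (fun k hk => deg_a (ha k hk))]
  have : C.card * R ≤ ∑ l ∈ C, (∑ r ∈ Finset.range (R + 1), Polynomial.C (y l ^ r) * Polynomial.X ^ (R - r)).natDegree := by
    rw [← smul_eq_mul, ← Finset.sum_const]
    exact Finset.sum_le_sum fun l _ => deg_y _ _
  simp only [Finset.sum_const, smul_eq_mul, mul_one]
  nlinarith

theorem PR_aeval (u : UG N) (R : ℕ) :
    star (u : Matrix (Fin N) (Fin N) ℂ).det ^ (C.card * (R + 1)) *
      det (Polynomial.aeval (u : Matrix (Fin N) (Fin N) ℂ) (PR a x y A B C R)) =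
    star (u : Matrix (Fin N) (Fin N) ℂ).det ^ C.card *
      (∏ k ∈ A, det (1 - a k • (u : Matrix (Fin N) (Fin N) ℂ))) *
      (∏ j ∈ B, geo (x j) u (R + 1)) * (∏ l ∈ C, geo (y l) (star u) (R + 1)) := by
  have hdet : ∀ (Q : Polynomial ℂ) , det (Polynomial.aeval (u : Matrix (Fin N) (Fin N) ℂ) Q) =
      (detMonoidHom.comp (Polynomial.aeval (R := ℂ) (u : Matrix (Fin N) (Fin N) ℂ)).toRingHom.toMonoidHom) Q := fun _ => rfl
  rw [PR, hdet, map_mul, map_mul, map_prod, map_prod, map_prod]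
  simp only [← hdet]
  have eA : ∀ k, Polynomial.aeval (u : Matrix (Fin N) (Fin N) ℂ) (1 - Polynomial.C (a k) * Polynomial.X) =
     1 - a k • (u : Matrix (Fin N) (Fin N) ℂ) := by
    intro k
    simp [Algebra.algebraMap_eq_smul_one]
  have eB : ∀ j, det (Polynomial.aeval (u : Matrix (Fin N) (Fin N) ℂ) (∑ r ∈ Finset.range (R + 1), (Polynomial.C (x j) * Polynomial.X) ^ r)) =
     geo (x j) u (R + 1) := by
    intro j
    rw [geo]
    simp [Algebra.algebraMap_eq_smul_one]
  have eC : ∀ l, det (Polynomial.aeval (u : Matrix (Fin N) (Fin N) ℂ) (∑ r ∈ Finset.range (R + 1), Polynomial.C (y l ^ r) * Polynomial.X ^ (R - r))) =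
     (u : Matrix (Fin N) (Fin N) ℂ).det ^ R * geo (y l) (star u) (R + 1) := by
    intro l
    rw [geo, ← det_pow, ← det_mul, Finset.mul_sum, map_sum]
    congr 1
    refine Finset.sum_congr rfl fun r hr => ?_
    simp only [Finset.mem_range] at hr
    have hsplit : (u : Matrix (Fin N) (Fin N) ℂ) ^ R = u ^ (R - r) * u ^ r := by
      rw [← pow_add]; norm_cast; congr 2; omega
    have hone : ((u : Matrix (Fin N) (Fin N) ℂ)) ^ r * ((star u : UG N) : Matrix (Fin N) (Fin N) ℂ) ^ r = 1 := by
      have h : u ^ r * (star u) ^ r = 1 := by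
        rw [← star_pow]; exact Unitary.mul_star_self _
      have := congrArg (fun z : UG N => (z : Matrix (Fin N) (Fin N) ℂ)) h
      simpa using this
    rw [smul_pow, mul_smul_comm, hsplit, mul_assoc, hone, mul_one]
    simp [smul_pow, Algebra.algebraMap_eq_smul_one]
  simp only [eA, eB, eC]
  rw [Finset.prod_mul_distrib, Finset.prod_const]
  have h1 := det_norm_one u
  have h2 : ((u : Matrix (Fin N) (Fin N) ℂ).det ^ R) ^ C.card * star (u : Matrix (Fin N) (Fin N) ℂ).det ^ (C.card * R) = 1 := by
    rw [← pow_mul, mul_comm R, ← mul_pow, h1, one_pow]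
  rw [mul_add, pow_add, mul_one]
  linear_combination (star (u : Matrix (Fin N) (Fin N) ℂ).det ^ C.card * (∏ k ∈ A, det (1 - a k • (u : Matrix (Fin N) (Fin N) ℂ))) *
      (∏ j ∈ B, geo (x j) u (R + 1)) * (∏ l ∈ C, geo (y l) (star u) (R + 1))) * h2

variable (μ : Measure (UG N)) [μ.IsHaarMeasure] [IsProbabilityMeasure μ]

theorem det_norm (u : UG N) : ‖(u : Matrix (Fin N) (Fin N) ℂ).det‖ = 1 := by
  have := congrArg norm (det_norm_one u)
  rw [norm_mul, norm_star, norm_one] at this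
  nlinarith [norm_nonneg (u : Matrix (Fin N) (Fin N) ℂ).det]

theorem lim_left (hx : ∀ j ∈ B, ‖x j‖ < 1) (hy : ∀ l ∈ C, ‖y l‖ < 1) :
    Filter.Tendsto (fun R => ∫ u : UG N, star (u : Matrix (Fin N) (Fin N) ℂ).det ^ (C.card * (R + 1)) *
      det (Polynomial.aeval (u : Matrix (Fin N) (Fin N) ℂ) (PR a x y A B C R)) ∂μ) Filter.atTop
    (nhds (∫ u : UG N, star (u : Matrix (Fin N) (Fin N) ℂ).det ^ C.card *
      (∏ k ∈ A, det (1 - a k • (u : Matrix (Fin N) (Fin N) ℂ))) *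
      (∏ j ∈ B, (det (1 - x j • (u : Matrix (Fin N) (Fin N) ℂ)))⁻¹) *
      (∏ l ∈ C, (det (1 - y l • ((star u : UG N) : Matrix (Fin N) (Fin N) ℂ)))⁻¹) ∂μ)) := by
  simp only [PR_aeval]
  have hcA : Continuous (fun u : UG N => star (u : Matrix (Fin N) (Fin N) ℂ).det ^ C.card *
      (∏ k ∈ A, det (1 - a k • (u : Matrix (Fin N) (Fin N) ℂ)))) := by fun_prop
  refine tendsto_integral_of_dominated_convergence
    (fun u => ‖star (u : Matrix (Fin N) (Fin N) ℂ).det ^ C.card *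
      (∏ k ∈ A, det (1 - a k • (u : Matrix (Fin N) (Fin N) ℂ)))‖ *
      (∏ j ∈ B, N.factorial • ((1 - ‖x j‖)⁻¹) ^ N) * (∏ l ∈ C, N.factorial • ((1 - ‖y l‖)⁻¹) ^ N)) ?_ ?_ ?_ ?_
  · intro R
    apply Continuous.aestronglyMeasurable
    refine (hcA.mul ?_).mul ?_
    · exact continuous_finsetProd _ fun j _ => geo_cont _ _
    · exact continuous_finsetProd _ fun j _ => (geo_cont _ _).comp continuous_star
  · have := (integrable_of_cont μ hcA).norm
    exact (this.mul_const _).mul_const _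
  · intro R
    refine Filter.Eventually.of_forall fun u => ?_
    rw [norm_mul, norm_mul, norm_prod, norm_prod]
    have hB : ∏ j ∈ B, ‖geo (x j) u (R + 1)‖ ≤ ∏ j ∈ B, N.factorial • ((1 - ‖x j‖)⁻¹) ^ N :=
      Finset.prod_le_prod (fun _ _ => norm_nonneg _) fun j hj => geo_bound (hx j hj) _ _
    have hC : ∏ l ∈ C, ‖geo (y l) (star u) (R + 1)‖ ≤ ∏ l ∈ C, N.factorial • ((1 - ‖y l‖)⁻¹) ^ N :=
      Finset.prod_le_prod (fun _ _ => norm_nonneg _) fun j hj => geo_bound (hy j hj) _ _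
    refine mul_le_mul (mul_le_mul_of_nonneg_left hB (norm_nonneg _)) hC (Finset.prod_nonneg fun _ _ => norm_nonneg _) ?_
    exact mul_nonneg (norm_nonneg _) ((Finset.prod_nonneg fun _ _ => norm_nonneg _).trans hB)
  · refine Filter.Eventually.of_forall fun u => ?_
    refine (Filter.Tendsto.mul tendsto_const_nhds ?_).mul ?_
    · exact tendsto_finsetProd _ fun j hj => (geo_tendsto (hx j hj) u).comp (Filter.tendsto_add_atTop_nat 1)
    · exact tendsto_finsetProd _ fun l hl => (geo_tendsto (hy l hl) (star u)).comp (Filter.tendsto_add_atTop_nat 1)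

end
end ACR


namespace ACR

section

/-- Fourier coefficient -/
noncomputable def fc (g : ℂ → ℂ) (m : ℤ) : ℂ := Real.circleAverage (fun t => g t * t ^ (-m)) 0 1

theorem sph_ne {t : ℂ} (ht : t ∈ Metric.sphere (0 : ℂ) 1) : t ≠ 0 := by
  rintro rfl; simp at ht

theorem fc_congr {g g' : ℂ → ℂ} (h : ∀ t ∈ Metric.sphere (0 : ℂ) 1, g t = g' t) (m : ℤ) : fc g m = fc g' m := by
  apply Real.circleAverage_congr_sphere
  intro t ht
  rw [abs_one] at ht
  simp only [h t ht]

theorem zpow_contOn (m : ℤ) : ContinuousOn (fun t : ℂ => t ^ m) (Metric.sphere (0 : ℂ) 1) :=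
  fun t ht => (continuousAt_zpow₀ t m (Or.inl (sph_ne ht))).continuousWithinAt

theorem fc_int {g : ℂ → ℂ} (h : ContinuousOn g (Metric.sphere (0 : ℂ) 1)) (m : ℤ) :
    CircleIntegrable (fun t => g t * t ^ (-m)) 0 1 := by
  apply ContinuousOn.circleIntegrable'
  rw [abs_one]
  exact h.mul (zpow_contOn _)

theorem fc_const_mul (c : ℂ) (g : ℂ → ℂ) (m : ℤ) : fc (fun t => c * g t) m = c * fc g m := by
  unfold fc
  rw [← smul_eq_mul c, ← Real.circleAverage_fun_smul]
  simp only [smul_eq_mul, mul_assoc]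

theorem fc_add {g g' : ℂ → ℂ} (h : ContinuousOn g (Metric.sphere (0 : ℂ) 1))
    (h' : ContinuousOn g' (Metric.sphere (0 : ℂ) 1)) (m : ℤ) :
    fc (fun t => g t + g' t) m = fc g m + fc g' m := by
  unfold fc
  simp only [add_mul]
  exact Real.circleAverage_fun_add (fc_int h m) (fc_int h' m)

theorem fc_sum {κ : Type*} (s : Finset κ) {g : κ → ℂ → ℂ} (h : ∀ k ∈ s, ContinuousOn (g k) (Metric.sphere (0 : ℂ) 1))
    (m : ℤ) : fc (fun t => ∑ k ∈ s, g k t) m = ∑ k ∈ s, fc (g k) m := by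
  unfold fc
  simp only [Finset.sum_mul]
  exact Real.circleAverage_fun_sum (fun k hk => fc_int (h k hk) m)

theorem fc_shift (g : ℂ → ℂ) (k m : ℤ) : fc (fun t => t ^ k * g t) m = fc g (m - k) := by
  apply Real.circleAverage_congr_sphere
  intro t ht
  rw [abs_one] at ht
  simp only
  rw [mul_comm (t ^ k), mul_assoc, ← zpow_add₀ (sph_ne ht)]
  congr 2; ring

theorem fc_inv (g : ℂ → ℂ) (m : ℤ) : fc (fun t => g t⁻¹) m = fc g (-m) := by
  unfold fc
  rw [← Real.circleAverage_zero_one_congr_inv]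
  simp

theorem fc_zero_of_diff {h : ℂ → ℂ} (hh : ∀ t ∈ Metric.closedBall (0 : ℂ) 1, DifferentiableAt ℂ h t) (i : ℕ) :
    fc h (-(i : ℤ)) = if i = 0 then h 0 else 0 := by
  have h1 : DiffContOnCl ℂ (fun t => h t * t ^ i) (Metric.ball (0 : ℂ) |1|) := by
    apply DifferentiableOn.diffContOnCl
    intro t ht
    have ht := Metric.closure_ball_subset_closedBall ht
    rw [abs_one] at ht
    have h2 := hh t ht
    exact DifferentiableAt.differentiableWithinAt (by fun_prop)
  have := h1.circleAverage
  unfold fc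
  simp only [neg_neg, zpow_natCast]
  rw [this]
  by_cases hi : i = 0 <;> simp [hi]

theorem fc_one (m : ℤ) : fc (fun _ => 1) m = if m = 0 then 1 else 0 := by
  rcases le_total m 0 with h | h
  · obtain ⟨k, rfl⟩ : ∃ k : ℕ, m = -(k : ℤ) := ⟨m.natAbs, by omega⟩
    rw [fc_zero_of_diff (by intros; fun_prop)]
    simp
  · obtain ⟨k, rfl⟩ : ∃ k : ℕ, m = (k : ℤ) := ⟨m.natAbs, by omega⟩
    have := fc_inv (fun _ => 1) k
    rw [this, fc_zero_of_diff (by intros; fun_prop)]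
    simp

theorem fc_poly (P : Polynomial ℂ) (m : ℕ) : fc (fun t => P.eval t) m = P.coeff m := by
  have e : ∀ t, P.eval t = ∑ k ∈ Finset.range (P.natDegree + 1), P.coeff k * (t ^ (k : ℤ) * 1) := by
    intro t
    rw [Polynomial.eval_eq_sum_range]; simp
  simp only [e]
  rw [fc_sum (g := fun k t => P.coeff k * (t ^ (k : ℤ) * 1)) _
    (fun k _ => continuousOn_const.mul ((zpow_contOn _).mul continuousOn_const))]
  simp only [fc_const_mul]
  have : ∀ k : ℕ, fc (fun t => t ^ (k : ℤ) * 1) m = if k = m then 1 else 0 := by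
    intro k
    rw [fc_shift (fun _ => 1), fc_one]
    by_cases hk : k = m
    · simp [hk]
    · rw [if_neg (by omega), if_neg hk]
  simp only [this]
  simp only [mul_ite, mul_one, mul_zero, Finset.sum_ite_eq', Finset.mem_range]
  split_ifs with h
  · rfl
  · rw [Polynomial.coeff_eq_zero_of_natDegree_lt (by omega)]

/-- Toeplitz determinant -/
noncomputable def TD (g : ℂ → ℂ) (N : ℕ) : ℂ := det (Matrix.of fun i j : Fin N => fc g ((j : ℤ) - (i : ℤ)))

theorem toep_eq (P : Polynomial ℂ) (M N : ℕ) :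
    (toep P M N).det = TD (fun t => t ^ (-(M : ℤ)) * P.eval t) N := by
  rw [TD]
  congr 1
  ext i j
  simp only [toep, Matrix.of_apply]
  rw [← fc_poly, fc_shift]
  have := fc_shift (fun t => P.eval t) (i : ℕ) ((M + j : ℕ) : ℤ)
  simp only [Polynomial.eval_mul, Polynomial.eval_pow, Polynomial.eval_X]
  simp only [zpow_natCast] at this
  rw [this]
  congr 1
  push_cast; ring

theorem fc_tendsto {g : ℕ → ℂ → ℂ} {g' : ℂ → ℂ} (hc : ∀ R, ContinuousOn (g R) (Metric.sphere (0 : ℂ) 1))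
    (b : ℝ) (hb : ∀ R, ∀ t ∈ Metric.sphere (0 : ℂ) 1, ‖g R t‖ ≤ b)
    (hl : ∀ t ∈ Metric.sphere (0 : ℂ) 1, Filter.Tendsto (fun R => g R t) Filter.atTop (nhds (g' t))) (m : ℤ) :
    Filter.Tendsto (fun R => fc (g R) m) Filter.atTop (nhds (fc g' m)) := by
  unfold fc Real.circleAverage
  refine Filter.Tendsto.const_smul ?_ _
  have hs : ∀ θ : ℝ, circleMap 0 1 θ ∈ Metric.sphere (0 : ℂ) 1 := fun θ => circleMap_mem_sphere 0 zero_le_one θ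
  refine intervalIntegral.tendsto_integral_filter_of_dominated_convergence (fun _ => b) ?_ ?_ ?_ ?_
  · refine Filter.Eventually.of_forall fun R => ?_
    apply Continuous.aestronglyMeasurable
    exact ((hc R).mul (zpow_contOn _)).comp_continuous (continuous_circleMap 0 1) hs
  · refine Filter.Eventually.of_forall fun R => Filter.Eventually.of_forall fun θ _ => ?_
    have h1 : ‖circleMap 0 1 θ‖ = 1 := by simpa using hs θ
    rw [norm_mul, norm_zpow, h1, _root_.one_zpow, mul_one]
    exact hb R _ (hs θ)
  · exact intervalIntegrable_const
  · refine Filter.Eventually.of_forall fun θ _ => ?_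
    exact (hl _ (hs θ)).mul_const _

theorem TD_tendsto {g : ℕ → ℂ → ℂ} {g' : ℂ → ℂ} (hc : ∀ R, ContinuousOn (g R) (Metric.sphere (0 : ℂ) 1))
    (b : ℝ) (hb : ∀ R, ∀ t ∈ Metric.sphere (0 : ℂ) 1, ‖g R t‖ ≤ b)
    (hl : ∀ t ∈ Metric.sphere (0 : ℂ) 1, Filter.Tendsto (fun R => g R t) Filter.atTop (nhds (g' t))) (N : ℕ) :
    Filter.Tendsto (fun R => TD (g R) N) Filter.atTop (nhds (TD g' N)) := by
  unfold TD
  have h1 : Continuous (fun A : Matrix (Fin N) (Fin N) ℂ => det A) := by fun_prop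
  refine (h1.tendsto _).comp ?_
  refine tendsto_pi_nhds.mpr fun i => ?_
  refine tendsto_pi_nhds.mpr fun j => ?_
  exact fc_tendsto hc b hb hl _

variable {ι : Type*} (a x y : ι → ℂ) (A B C : Finset ι)

/-- symbol -/
noncomputable def GG (t : ℂ) : ℂ :=
  (∏ k ∈ A, (1 - a k * t)) * (∏ j ∈ B, (1 - x j * t)⁻¹) * (∏ l ∈ C, (t - y l)⁻¹)

theorem geo_scalar_bound {c : ℂ} {r : ℝ} (hc : ‖c‖ = r) (hr : r < 1) (R : ℕ) :
    ‖∑ k ∈ Finset.range R, c ^ k‖ ≤ (1 - r)⁻¹ := by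
  refine (norm_sum_le _ _).trans ?_
  simp only [norm_pow, hc]
  have h0 : 0 ≤ r := hc ▸ norm_nonneg _
  rw [← tsum_geometric_of_lt_one h0 hr]
  exact (summable_geometric_of_lt_one h0 hr).sum_le_tsum _ (fun _ _ => by positivity)

theorem geo_scalar_tendsto {c : ℂ} (hc : ‖c‖ < 1) :
    Filter.Tendsto (fun R => ∑ k ∈ Finset.range (R + 1), c ^ k) Filter.atTop (nhds (1 - c)⁻¹) :=
  ((hasSum_geometric_of_norm_lt_one hc).tendsto_sum_nat).comp (Filter.tendsto_add_atTop_nat 1)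

theorem PR_eval {t : ℂ} (ht : t ≠ 0) (R : ℕ) :
    t ^ (-((C.card * (R + 1) : ℕ) : ℤ)) * (PR a x y A B C R).eval t =
    (∏ k ∈ A, (1 - a k * t)) * (∏ j ∈ B, ∑ r ∈ Finset.range (R + 1), (x j * t) ^ r) *
      (∏ l ∈ C, t⁻¹ * ∑ r ∈ Finset.range (R + 1), (y l * t⁻¹) ^ r) := by
  have eC : ∀ l, ∑ r ∈ Finset.range (R + 1), y l ^ r * t ^ (R - r) =
      t ^ (R + 1) * (t⁻¹ * ∑ r ∈ Finset.range (R + 1), (y l * t⁻¹) ^ r) := by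
    intro l
    rw [Finset.mul_sum, Finset.mul_sum]
    refine Finset.sum_congr rfl fun r hr => ?_
    simp only [Finset.mem_range] at hr
    have : t ^ (R + 1) = t ^ (R - r) * t ^ r * t := by
      rw [← pow_add, ← pow_succ]; congr 1; omega
    rw [this, mul_pow, inv_pow]
    field_simp
  simp only [PR, Polynomial.eval_mul, Polynomial.eval_prod, Polynomial.eval_finsetSum, Polynomial.eval_sub,
    Polynomial.eval_one, Polynomial.eval_C, Polynomial.eval_X, Polynomial.eval_pow, eC]
  rw [Finset.prod_mul_distrib, Finset.prod_const, ← pow_mul, mul_comm (R + 1), _root_.zpow_neg, zpow_natCast]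
  have h1 := inv_mul_cancel₀ (pow_ne_zero (C.card * (R + 1)) ht)
  linear_combination ((∏ k ∈ A, (1 - a k * t)) * (∏ j ∈ B, ∑ r ∈ Finset.range (R + 1), (x j * t) ^ r) *
      (∏ l ∈ C, t⁻¹ * ∑ r ∈ Finset.range (R + 1), (y l * t⁻¹) ^ r)) * h1

theorem lim_right (hx : ∀ j ∈ B, ‖x j‖ < 1) (hy : ∀ l ∈ C, ‖y l‖ < 1) (N : ℕ) :
    Filter.Tendsto (fun R => (toep (PR a x y A B C R) (C.card * (R + 1)) N).det) Filter.atTop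
    (nhds (TD (GG a x y A B C) N)) := by
  simp only [toep_eq]
  have hA : ContinuousOn (fun t : ℂ => ∏ k ∈ A, (1 - a k * t)) (Metric.sphere (0 : ℂ) 1) := by fun_prop
  obtain ⟨b, hb⟩ := (isCompact_sphere (0 : ℂ) 1).exists_bound_of_continuousOn hA
  refine TD_tendsto ?_ (|b| * (∏ j ∈ B, (1 - ‖x j‖)⁻¹) * (∏ l ∈ C, (1 - ‖y l‖)⁻¹)) ?_ ?_ N
  · intro R
    exact (zpow_contOn _).mul (by fun_prop)
  · intro R t ht
    rw [PR_eval _ _ _ _ _ _ (sph_ne ht)]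
    have h1 : ‖t‖ = 1 := by simpa using ht
    rw [norm_mul, norm_mul, norm_prod B, norm_prod C]
    have hB : ∏ j ∈ B, ‖∑ r ∈ Finset.range (R + 1), (x j * t) ^ r‖ ≤ ∏ j ∈ B, (1 - ‖x j‖)⁻¹ :=
      Finset.prod_le_prod (fun _ _ => norm_nonneg _) fun j hj =>
        geo_scalar_bound (by rw [norm_mul, h1, mul_one]) (hx j hj) _
    have hC : ∏ l ∈ C, ‖t⁻¹ * ∑ r ∈ Finset.range (R + 1), (y l * t⁻¹) ^ r‖ ≤ ∏ l ∈ C, (1 - ‖y l‖)⁻¹ :=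
      Finset.prod_le_prod (fun _ _ => norm_nonneg _) fun j hj => by
        rw [norm_mul, norm_inv, h1, inv_one, one_mul]
        exact geo_scalar_bound (by rw [norm_mul, norm_inv, h1, inv_one, mul_one]) (hy j hj) _
    refine mul_le_mul (mul_le_mul ((hb t ht).trans (le_abs_self b)) hB (Finset.prod_nonneg fun _ _ => norm_nonneg _) (abs_nonneg _)) hC (Finset.prod_nonneg fun _ _ => norm_nonneg _) ?_
    exact mul_nonneg (abs_nonneg _) ((Finset.prod_nonneg fun _ _ => norm_nonneg _).trans hB)
  · intro t ht
    have h1 : ‖t‖ = 1 := by simpa using ht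
    have h0 := sph_ne ht
    simp only [PR_eval _ _ _ _ _ _ h0]
    refine (Filter.Tendsto.mul tendsto_const_nhds ?_).mul ?_
    · exact tendsto_finsetProd _ fun j hj => geo_scalar_tendsto (by rw [norm_mul, h1, mul_one]; exact hx j hj)
    · refine tendsto_finsetProd _ fun l hl => ?_
      have := (geo_scalar_tendsto (c := y l * t⁻¹) (by rw [norm_mul, norm_inv, h1, inv_one, mul_one]; exact hy l hl)).const_mul t⁻¹
      convert this using 2
      rw [← mul_inv]
      congr 1
      field_simp

theorem szego {N : ℕ} (μ : Measure (UG N)) [μ.IsHaarMeasure] [IsProbabilityMeasure μ] (hN : 1 ≤ N)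
    (ha : ∀ k ∈ A, a k ≠ 0) (hAC : C.card ≤ A.card)
    (hx : ∀ j ∈ B, ‖x j‖ < 1) (hy : ∀ l ∈ C, ‖y l‖ < 1) :
    ∫ u : UG N, star (u : Matrix (Fin N) (Fin N) ℂ).det ^ C.card *
      (∏ k ∈ A, det (1 - a k • (u : Matrix (Fin N) (Fin N) ℂ))) *
      (∏ j ∈ B, (det (1 - x j • (u : Matrix (Fin N) (Fin N) ℂ)))⁻¹) *
      (∏ l ∈ C, (det (1 - y l • ((star u : UG N) : Matrix (Fin N) (Fin N) ℂ)))⁻¹) ∂μ =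
    TD (GG a x y A B C) N := by
  have h1 := lim_left a x y A B C μ hx hy
  have h2 := lim_right a x y A B C hx hy N
  refine tendsto_nhds_unique h1 (h2.congr fun R => ?_)
  rw [heine μ hN _ (PR_deg a x y A B C ha hAC R)]

end
end ACR


namespace ACR

section
variable {ι : Type*}

/-- E polynomial -/
noncomputable def EE (y : ι → ℂ) (C : Finset ι) : Polynomial ℂ := ∏ l ∈ C, (1 - Polynomial.C (y l) * Polynomial.X)

theorem EE_eval (y : ι → ℂ) (C : Finset ι) (x : ℂ) : (EE y C).eval x = ∏ l ∈ C, (1 - y l * x) := by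
  simp [EE, Polynomial.eval_prod]

theorem EE_deg (y : ι → ℂ) (C : Finset ι) : (EE y C).natDegree ≤ C.card := by
  refine (Polynomial.natDegree_prod_le _ _).trans ?_
  rw [Finset.card_eq_sum_ones]
  refine Finset.sum_le_sum fun l _ => ?_
  compute_degree

theorem EE_sum (y : ι → ℂ) (C : Finset ι) (x : ℂ) :
    ∏ l ∈ C, (1 - y l * x) = ∑ k ∈ Finset.range (C.card + 1), (EE y C).coeff k * x ^ k := by
  rw [← EE_eval, Polynomial.eval_eq_sum_range' (Nat.lt_succ_of_le (EE_deg y C))]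

theorem Y_sum (y : ι → ℂ) (C : Finset ι) {t : ℂ} (ht : t ≠ 0) :
    ∏ l ∈ C, (t - y l) = ∑ k ∈ Finset.range (C.card + 1), (EE y C).coeff k * t ^ (C.card - k) := by
  have h1 : ∏ l ∈ C, (t - y l) = t ^ C.card * ∏ l ∈ C, (1 - y l * t⁻¹) := by
    rw [← Finset.prod_const, ← Finset.prod_mul_distrib]
    refine Finset.prod_congr rfl fun l _ => ?_
    field_simp
  rw [h1, EE_sum, Finset.mul_sum]
  refine Finset.sum_congr rfl fun k hk => ?_
  simp only [Finset.mem_range] at hk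
  have : t ^ C.card = t ^ (C.card - k) * t ^ k := by rw [← pow_add]; congr 1; omega
  rw [this, inv_pow]
  field_simp

theorem Q_id (y : ι → ℂ) (C : Finset ι) (x : ℂ) {t : ℂ} (ht : t ≠ 0) :
    (∏ l ∈ C, (1 - y l * x)) - x ^ C.card * ∏ l ∈ C, (t - y l) =
    (1 - x * t) * ∑ k ∈ Finset.range (C.card + 1), ∑ s ∈ Finset.range (C.card - k),
      (EE y C).coeff k * x ^ (k + s) * t ^ s := by
  rw [EE_sum, Y_sum y C ht, Finset.mul_sum, Finset.mul_sum, ← Finset.sum_sub_distrib]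
  refine Finset.sum_congr rfl fun k hk => ?_
  simp only [Finset.mem_range] at hk
  have h1 : ∑ s ∈ Finset.range (C.card - k), (EE y C).coeff k * x ^ (k + s) * t ^ s =
      (EE y C).coeff k * x ^ k * ∑ s ∈ Finset.range (C.card - k), (x * t) ^ s := by
    rw [Finset.mul_sum]
    refine Finset.sum_congr rfl fun s _ => ?_
    rw [pow_add, mul_pow]; ring
  have h2 := mul_neg_geom_sum (x * t) (C.card - k)
  have h3 : x ^ C.card = x ^ k * x ^ (C.card - k) := by rw [← pow_add]; congr 1; omega
  rw [h1, h3]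
  rw [mul_pow] at h2
  linear_combination (- (EE y C).coeff k * x ^ k) * h2

theorem step_poly (n : ℕ) (y : ι → ℂ) (C : Finset ι) (g0 : ℂ → ℂ)
    (hg0 : ContinuousOn g0 (Metric.sphere (0 : ℂ) 1)) (h00 : ℂ) :
    ∃ p : Polynomial ℂ, p.natDegree ≤ C.card ∧ ∀ (x : ℂ) (g1 h1 : ℂ → ℂ),
      (∀ t ∈ Metric.closedBall (0 : ℂ) 1, DifferentiableAt ℂ h1 t) → h1 0 = h00 →
      (∀ t ∈ Metric.sphere (0 : ℂ) 1, g1 t * ∏ l ∈ C, (t - y l) = h1 t) →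
      (∀ t ∈ Metric.sphere (0 : ℂ) 1, g0 t = (1 - x * t) * g1 t) →
      ContinuousOn g1 (Metric.sphere (0 : ℂ) 1) →
      p.eval x = (∏ l ∈ C, (1 - y l * x)) * TD g1 (n + 1) := by
  let cp : ℕ → Polynomial ℂ := fun i => (if i = 0 then Polynomial.C h00 * Polynomial.X ^ C.card else 0) +
    ∑ k ∈ Finset.range (C.card + 1), ∑ s ∈ Finset.range (C.card - k),
      Polynomial.C ((EE y C).coeff k * fc g0 (-(i : ℤ) - s)) * Polynomial.X ^ (k + s)
  have hcp : ∀ i, (cp i).natDegree ≤ C.card := by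
    intro i
    refine (Polynomial.natDegree_add_le _ _).trans (max_le ?_ ?_)
    · split_ifs
      · exact Polynomial.natDegree_C_mul_X_pow_le _ _
      · simp
    · refine Polynomial.natDegree_sum_le_of_forall_le _ _ fun k hk => ?_
      refine Polynomial.natDegree_sum_le_of_forall_le _ _ fun s hs => ?_
      simp only [Finset.mem_range] at hk hs
      exact (Polynomial.natDegree_C_mul_X_pow_le _ _).trans (by omega)
  let M0 : Matrix (Fin (n + 1)) (Fin (n + 1)) ℂ := Matrix.of fun i j => fc g0 ((j : ℤ) - (i : ℤ))
  refine ⟨∑ i : Fin (n + 1), Polynomial.C ((-1) ^ (i : ℕ) * det (M0.submatrix i.succAbove Fin.succ)) * cp i, ?_, ?_⟩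
  · refine Polynomial.natDegree_sum_le_of_forall_le _ _ fun i _ => ?_
    exact (Polynomial.natDegree_C_mul_le _ _).trans (hcp i)
  · intro x g1 h1 hd h0 hY hg hc
    have hcpe : ∀ i : ℕ, (cp i).eval x = (∏ l ∈ C, (1 - y l * x)) * fc g1 (-(i : ℤ)) := by
      intro i
      rw [← fc_const_mul]
      have hpt : ∀ t ∈ Metric.sphere (0 : ℂ) 1, (∏ l ∈ C, (1 - y l * x)) * g1 t =
          x ^ C.card * h1 t + ∑ k ∈ Finset.range (C.card + 1), ∑ s ∈ Finset.range (C.card - k),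
            ((EE y C).coeff k * x ^ (k + s)) * (t ^ (s : ℤ) * g0 t) := by
        intro t ht
        have hQ := Q_id y C x (sph_ne ht)
        have e : ∑ k ∈ Finset.range (C.card + 1), ∑ s ∈ Finset.range (C.card - k),
            ((EE y C).coeff k * x ^ (k + s)) * (t ^ (s : ℤ) * g0 t) = 
            (∑ k ∈ Finset.range (C.card + 1), ∑ s ∈ Finset.range (C.card - k),
              (EE y C).coeff k * x ^ (k + s) * t ^ s) * g0 t := by
          rw [Finset.sum_mul]
          refine Finset.sum_congr rfl fun k _ => ?_
          rw [Finset.sum_mul]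
          refine Finset.sum_congr rfl fun s _ => ?_
          rw [zpow_natCast]; ring
        rw [e, ← hY t ht, hg t ht]
        linear_combination (g1 t) * hQ
      rw [fc_congr hpt]
      have hch : ContinuousOn h1 (Metric.sphere (0 : ℂ) 1) := fun t ht =>
        (hd t (Metric.sphere_subset_closedBall ht)).continuousAt.continuousWithinAt
      have hcg : ∀ (c : ℂ) (s : ℕ), ContinuousOn (fun t => c * (t ^ (s : ℤ) * g0 t)) (Metric.sphere (0 : ℂ) 1) :=
        fun c s => continuousOn_const.mul ((zpow_contOn _).mul hg0)
      rw [fc_add (g := fun t => x ^ C.card * h1 t) (continuousOn_const.mul hch)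
        (continuousOn_finsetSum _ fun k _ => continuousOn_finsetSum _ fun s _ => hcg _ s)]
      rw [fc_sum _ (fun k _ => continuousOn_finsetSum _ fun s _ => hcg _ s)]
      rw [fc_const_mul, fc_zero_of_diff hd, h0]
      have e2 : ∀ k : ℕ, fc (fun t => ∑ s ∈ Finset.range (C.card - k), ((EE y C).coeff k * x ^ (k + s)) * (t ^ (s : ℤ) * g0 t)) (-(i : ℤ)) =
          ∑ s ∈ Finset.range (C.card - k), ((EE y C).coeff k * x ^ (k + s)) * fc g0 (-(i : ℤ) - s) := by
        intro k
        rw [fc_sum _ (fun s _ => hcg _ s)]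
        simp only [fc_const_mul, fc_shift]
      simp only [e2]
      simp only [cp, Polynomial.eval_add, Polynomial.eval_finsetSum, Polynomial.eval_mul, Polynomial.eval_C,
        Polynomial.eval_pow, Polynomial.eval_X]
      congr 1
      · split_ifs
        · simp only [Polynomial.eval_mul, Polynomial.eval_C, Polynomial.eval_pow, Polynomial.eval_X]; ring
        · simp
      · refine Finset.sum_congr rfl fun k _ => Finset.sum_congr rfl fun s _ => ?_
        ring
    have hdet : TD g1 (n + 1) = det (Matrix.of fun i j : Fin (n + 1) => if j = 0 then fc g1 (-(i : ℤ)) else fc g0 ((j : ℤ) - (i : ℤ))) := by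
      rw [TD]
      refine Matrix.det_eq_of_forall_col_eq_smul_add_pred (fun _ => x) ?_ ?_
      · intro i; simp
      · intro i j
        simp only [Matrix.of_apply, Fin.succ_ne_zero, if_false]
        rw [fc_congr hg]
        have e1 : ∀ t ∈ Metric.sphere (0 : ℂ) 1, (1 - x * t) * g1 t = g1 t + (-x) * (t ^ (1 : ℤ) * g1 t) := by
          intro t _; rw [zpow_one]; ring
        rw [fc_congr e1, fc_add (g' := fun t => (-x) * (t ^ (1 : ℤ) * g1 t)) hc (continuousOn_const.mul ((zpow_contOn _).mul hc)), fc_const_mul, fc_shift]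
        have : ((j.succ : Fin (n+1)) : ℤ) - (i : ℤ) - 1 = ((j.castSucc : Fin (n+1)) : ℤ) - (i : ℤ) := by
          simp; ring
        rw [this]; ring
    rw [hdet, Matrix.det_succ_column_zero, Finset.mul_sum, Polynomial.eval_finsetSum]
    refine Finset.sum_congr rfl fun i _ => ?_
    rw [Polynomial.eval_mul, Polynomial.eval_C, hcpe]
    have : (Matrix.of fun i j : Fin (n + 1) => if j = 0 then fc g1 (-(i : ℤ)) else fc g0 ((j : ℤ) - (i : ℤ))).submatrix i.succAbove Fin.succ
       = M0.submatrix i.succAbove Fin.succ := by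
      ext i' j'
      simp [M0]
    rw [this]
    simp only [Matrix.of_apply, if_true]
    ring

end
end ACR


namespace ACR

section
variable {ι : Type*} [DecidableEq ι]

/-- weight -/
noncomputable def WW (a x y : ι → ℂ) (N : ℕ) (A B C S : Finset ι) : ℂ :=
  (∏ s ∈ S, (-a s) ^ N) * (∏ s ∈ S, ∏ j ∈ B, (1 - x j / a s)) *
    (∏ r ∈ A \ S, ∏ l ∈ C, (1 - y l * a r)) /
    ((∏ r ∈ A \ S, ∏ s ∈ S, (1 - a r / a s)) * ∏ j ∈ B, ∏ l ∈ C, (1 - y l * x j))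

theorem alg1 {e : ℂ} (c1 c2 c3 c4 c5 c6 : ℂ) (he : e ≠ 0) :
    c1 * (c2 * c3 * c4 / (c5 * c6)) = c2 * c3 * (c1 * c4) / (e * c5 * c6) * e := by
  field_simp

theorem alg2 {e : ℂ} (c1 c2 c3 c4 c5 c6 : ℂ) (he : e ≠ 0) :
    c2 * c3 * c4 / (c5 * c6) * c1 = e * (c2 * (c1 * c3) * c4 / (c5 * (e * c6))) := by
  field_simp

theorem y_ne {y t : ℂ} (hy : ‖y‖ < 1) (ht : t ∈ Metric.sphere (0 : ℂ) 1) : t - y ≠ 0 := by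
  intro h
  have : t = y := by linear_combination h
  subst this
  simp at ht; linarith

theorem x_ne {x t : ℂ} (hx : ‖x‖ < 1) (ht : ‖t‖ ≤ 1) : 1 - x * t ≠ 0 := by
  intro h
  have : x * t = 1 := by linear_combination -h
  have := congrArg norm this
  rw [norm_mul, norm_one] at this
  nlinarith [norm_nonneg x, norm_nonneg t]

theorem GG_cont (a x y : ι → ℂ) (A B C : Finset ι) (hx : ∀ j ∈ B, ‖x j‖ < 1) (hy : ∀ l ∈ C, ‖y l‖ < 1) :
    ContinuousOn (GG a x y A B C) (Metric.sphere (0 : ℂ) 1) := by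
  unfold GG
  refine (ContinuousOn.mul (by fun_prop) ?_).mul ?_
  · refine continuousOn_finsetProd _ fun j hj => ContinuousOn.inv₀ (by fun_prop) fun t ht => x_ne (hx j hj) ?_
    simp at ht; exact ht.le
  · exact continuousOn_finsetProd _ fun l hl => ContinuousOn.inv₀ (by fun_prop) fun t ht => y_ne (hy l hl) ht

/-- analytic part -/
noncomputable def HH (a x : ι → ℂ) (A B : Finset ι) (t : ℂ) : ℂ :=
  (∏ k ∈ A, (1 - a k * t)) * (∏ j ∈ B, (1 - x j * t)⁻¹)

theorem HH_diff (a x : ι → ℂ) (A B : Finset ι) (hx : ∀ j ∈ B, ‖x j‖ < 1) :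
    ∀ t ∈ Metric.closedBall (0 : ℂ) 1, DifferentiableAt ℂ (HH a x A B) t := by
  intro t ht
  unfold HH
  refine DifferentiableAt.mul (by fun_prop) ?_
  refine DifferentiableAt.fun_finsetProd fun j hj => DifferentiableAt.inv (by fun_prop) ?_
  exact x_ne (hx j hj) (by simpa using ht)

theorem GG_Y (a x y : ι → ℂ) (A B C : Finset ι) (hy : ∀ l ∈ C, ‖y l‖ < 1) :
    ∀ t ∈ Metric.sphere (0 : ℂ) 1, GG a x y A B C t * ∏ l ∈ C, (t - y l) = HH a x A B t := by
  intro t ht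
  have : (∏ l ∈ C, (t - y l)⁻¹) * ∏ l ∈ C, (t - y l) = 1 := by
    rw [← Finset.prod_mul_distrib]
    exact Finset.prod_eq_one fun l hl => inv_mul_cancel₀ (y_ne (hy l hl) ht)
  rw [GG, HH, mul_assoc, this, mul_one]

theorem TD_base (a x y : ι → ℂ) (A C : Finset ι) (hy : ∀ l ∈ C, ‖y l‖ < 1) (hA : A.card = C.card) (N : ℕ) :
    TD (GG a x y A ∅ C) N = (∏ s ∈ A, (-a s) ^ N) := by
  let h : ℂ → ℂ := fun z => (∏ k ∈ A, (z - a k)) * ∏ l ∈ C, (1 - y l * z)⁻¹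
  have hd : ∀ t ∈ Metric.closedBall (0 : ℂ) 1, DifferentiableAt ℂ h t := by
    intro t ht
    refine DifferentiableAt.mul (by fun_prop) ?_
    refine DifferentiableAt.fun_finsetProd fun j hj => DifferentiableAt.inv (by fun_prop) ?_
    exact x_ne (hy j hj) (by simpa using ht)
  have hg : ∀ t ∈ Metric.sphere (0 : ℂ) 1, GG a x y A ∅ C t = h t⁻¹ := by
    intro t ht
    have h0 := sph_ne ht
    simp only [GG, h, Finset.prod_empty, mul_one]
    have e1 : ∏ k ∈ A, (1 - a k * t) = t ^ A.card * ∏ k ∈ A, (t⁻¹ - a k) := by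
      rw [← Finset.prod_const, ← Finset.prod_mul_distrib]
      refine Finset.prod_congr rfl fun l _ => ?_
      field_simp
    have e2 : ∏ l ∈ C, (1 - y l * t⁻¹)⁻¹ = t ^ C.card * ∏ l ∈ C, (t - y l)⁻¹ := by
      rw [← Finset.prod_const, ← Finset.prod_mul_distrib]
      refine Finset.prod_congr rfl fun l hl => ?_
      have := y_ne (hy l hl) ht
      have h2 : 1 - y l * t⁻¹ = t⁻¹ * (t - y l) := by field_simp
      rw [h2, mul_inv, inv_inv]
    rw [e1, e2, hA]; ring
  have hent : ∀ m : ℕ, fc (GG a x y A ∅ C) m = if m = 0 then ∏ s ∈ A, (-a s) else 0 := by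
    intro m
    rw [fc_congr hg, fc_inv, fc_zero_of_diff hd]
    simp [h]
  rw [TD, det_of_lowerTriangular]
  · simp only [Matrix.of_apply, sub_self]
    have := hent 0
    simp only [Nat.cast_zero, if_true] at this
    rw [this, Finset.prod_const, Finset.card_univ, Fintype.card_fin, Finset.prod_pow]
  · intro i j hij
    have hij : i < j := hij
    simp only [Matrix.of_apply]
    have : ((j : ℕ) : ℤ) - ((i : ℕ) : ℤ) = ((j - i : ℕ) : ℤ) := by
      have : (i : ℕ) < j := hij
      omega
    rw [this, hent, if_neg]
    have : (i : ℕ) < j := hij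
    omega

theorem main_TD (a x y : ι → ℂ) (C : Finset ι) (hy : ∀ l ∈ C, ‖y l‖ < 1) (n : ℕ) (B : Finset ι) :
    (∀ j ∈ B, ‖x j‖ < 1) → ∀ A : Finset ι, (∀ k ∈ A, a k ≠ 0) → Set.InjOn a A → A.card = B.card + C.card →
    TD (GG a x y A B C) (n + 1) = ∑ S ∈ A.powersetCard C.card, WW a x y (n + 1) A B C S := by
  induction B using Finset.induction_on with
  | empty =>
    intro _ A ha hinj hcard
    simp only [Finset.card_empty, zero_add] at hcard
    rw [TD_base a x y A C hy hcard, ← hcard, Finset.powersetCard_self, Finset.sum_singleton, WW]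
    simp
  | insert b B hb ih =>
    intro hx A ha hinj hcard
    have hxB : ∀ j ∈ B, ‖x j‖ < 1 := fun j hj => hx j (Finset.mem_insert_of_mem hj)
    have hxb : ‖x b‖ < 1 := hx b (Finset.mem_insert_self _ _)
    rw [Finset.card_insert_of_notMem hb] at hcard
    obtain ⟨p, hpd, hp⟩ := step_poly n y C (GG a x y A B C) (GG_cont a x y A B C hxB hy) 1
    have h00 : ∀ (A B : Finset ι), HH a x A B 0 = 1 := by intro A B; simp [HH]
    have hpx := hp (x b) (GG a x y A (insert b B) C) (HH a x A (insert b B)) (HH_diff _ _ _ _ hx) (h00 _ _)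
      (GG_Y _ _ _ _ _ _ hy) (by
        intro t ht
        have := x_ne hxb (t := t) (by simp at ht; exact ht.le)
        simp only [GG, Finset.prod_insert hb]
        linear_combination (-((∏ k ∈ A, (1 - a k * t)) * (∏ j ∈ B, (1 - x j * t)⁻¹) * (∏ l ∈ C, (t - y l)⁻¹))) * mul_inv_cancel₀ this) (GG_cont _ _ _ _ _ _ hx hy)
    have hpa : ∀ k ∈ A, p.eval (a k) = (∏ l ∈ C, (1 - y l * a k)) *
        ∑ S ∈ (A.erase k).powersetCard C.card, WW a x y (n + 1) (A.erase k) B C S := by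
      intro k hk
      rw [← ih hxB (A.erase k) (fun k' hk' => ha k' (Finset.mem_of_mem_erase hk'))
        (hinj.mono (by exact_mod_cast Finset.erase_subset k A))
        (by rw [Finset.card_erase_of_mem hk]; omega)]
      refine hp (a k) (GG a x y (A.erase k) B C) (HH a x (A.erase k) B) (HH_diff _ _ _ _ hxB) (h00 _ _)
        (GG_Y _ _ _ _ _ _ hy) ?_ (GG_cont _ _ _ _ _ _ hxB hy)
      intro t ht
      simp only [GG]
      rw [← Finset.mul_prod_erase A _ hk]
      ring
    let ρ : Polynomial ℂ := ∑ S ∈ A.powersetCard C.card,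
      Polynomial.C (WW a x y (n + 1) A B C S) * ∏ s ∈ S, (1 - Polynomial.C (a s)⁻¹ * Polynomial.X)
    have hρe : ∀ z, ρ.eval z = ∑ S ∈ A.powersetCard C.card, WW a x y (n + 1) A B C S * ∏ s ∈ S, (1 - z / a s) := by
      intro z
      simp only [ρ, Polynomial.eval_finsetSum, Polynomial.eval_mul, Polynomial.eval_C, Polynomial.eval_prod,
        Polynomial.eval_sub, Polynomial.eval_one, Polynomial.eval_X]
      refine Finset.sum_congr rfl fun S _ => ?_
      congr 1
      refine Finset.prod_congr rfl fun s _ => ?_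
      rw [div_eq_mul_inv, mul_comm]
    have hρd : ρ.natDegree ≤ C.card := by
      refine Polynomial.natDegree_sum_le_of_forall_le _ _ fun S hS => ?_
      refine (Polynomial.natDegree_C_mul_le _ _).trans ?_
      refine (Polynomial.natDegree_prod_le _ _).trans ?_
      rw [← (Finset.mem_powersetCard.mp hS).2, Finset.card_eq_sum_ones]
      refine Finset.sum_le_sum fun l _ => ?_
      compute_degree
    have hρa : ∀ k ∈ A, ρ.eval (a k) = p.eval (a k) := by
      intro k hk
      rw [hρe, hpa k hk, Finset.mul_sum]
      symm
      refine Finset.sum_subset_zero_on_sdiff (Finset.powersetCard_mono (Finset.erase_subset k A)) ?_ ?_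
      · intro S hS
        simp only [Finset.mem_sdiff, Finset.mem_powersetCard] at hS
        have hkS : k ∈ S := by
          by_contra hkS
          exact hS.2 ⟨Finset.subset_erase.mpr ⟨hS.1.1, hkS⟩, hS.1.2⟩
        rw [Finset.prod_eq_zero hkS, mul_zero]
        rw [div_self (ha k hk), sub_self]
      · intro S hS
        rw [Finset.mem_powersetCard] at hS
        obtain ⟨hSA, hkS⟩ := Finset.subset_erase.mp hS.1
        have hsd : A \ S = insert k (A.erase k \ S) := by
          ext z
          simp only [Finset.mem_sdiff, Finset.mem_insert, Finset.mem_erase]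
          constructor
          · rintro ⟨h1, h2⟩
            by_cases hz : z = k
            · exact Or.inl hz
            · exact Or.inr ⟨⟨hz, h1⟩, h2⟩
          · rintro (rfl | ⟨⟨_, h1⟩, h2⟩)
            · exact ⟨hk, hkS⟩
            · exact ⟨h1, h2⟩
        have hk' : k ∉ A.erase k \ S := by simp
        have hne : ∏ s ∈ S, (1 - a k / a s) ≠ 0 := by
          refine Finset.prod_ne_zero_iff.mpr fun s hs h => ?_
          have hs0 := ha s (hSA hs)
          have : a k = a s := by
            field_simp at h
            linear_combination -h
          have := hinj hk (hSA hs) this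
          exact hkS (this ▸ hs)
        rw [WW, WW, hsd, Finset.prod_insert hk', Finset.prod_insert hk']
        exact alg1 _ _ _ _ _ _ hne
    have hρp : ρ = p := by
      apply Polynomial.eq_of_natDegree_lt_card_of_eval_eq' ρ p (A.image a)
      · intro z hz
        obtain ⟨k, hk, rfl⟩ := Finset.mem_image.mp hz
        exact hρa k hk
      · rw [Finset.card_image_of_injOn hinj]
        exact (max_le hρd hpd).trans_lt (by omega)
    have hE : ∏ l ∈ C, (1 - y l * x b) ≠ 0 :=
      Finset.prod_ne_zero_iff.mpr fun l hl => x_ne (hy l hl) hxb.le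
    rw [← hρp, hρe] at hpx
    apply mul_left_cancel₀ hE
    rw [← hpx, Finset.mul_sum]
    refine Finset.sum_congr rfl fun S hS => ?_
    rw [WW, WW]
    simp only [Finset.prod_insert hb, Finset.prod_mul_distrib]
    exact alg2 _ _ _ _ _ _ hE

end
end ACR


namespace ACR

section

theorem exists_perm_map {ι : Type*} [Fintype ι] [DecidableEq ι] (C S : Finset ι) (h : S.card = C.card) :
    ∃ σ : Equiv.Perm ι, C.map σ.toEmbedding = S := by
  have e : {z // z ∈ C} ≃ {z // z ∈ S} := Fintype.equivOfCardEq (by simp [h])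
  refine ⟨e.extendSubtype, ?_⟩
  apply Finset.eq_of_subset_of_card_le
  · intro z hz
    obtain ⟨w, hw, rfl⟩ := Finset.mem_map.mp hz
    exact e.extendSubtype_mem w hw
  · rw [Finset.card_map, h]

theorem perm_sum {ι : Type*} [Fintype ι] [DecidableEq ι] (C : Finset ι) (F : Finset ι → ℂ) :
    ∑ w : Equiv.Perm ι, F (C.map w.toEmbedding) =
      ((C.card.factorial * (Fintype.card ι - C.card).factorial : ℕ) : ℂ) *
        ∑ S ∈ (Finset.univ : Finset ι).powersetCard C.card, F S := by
  have hmaps : ∀ w ∈ (Finset.univ : Finset (Equiv.Perm ι)),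
      C.map w.toEmbedding ∈ (Finset.univ : Finset ι).powersetCard C.card := by
    intro w _
    rw [Finset.mem_powersetCard]
    exact ⟨Finset.subset_univ _, Finset.card_map _⟩
  let c : ℕ := (Finset.univ.filter fun w : Equiv.Perm ι => C.map w.toEmbedding = C).card
  have hc : ∀ S ∈ (Finset.univ : Finset ι).powersetCard C.card,
      (Finset.univ.filter fun w : Equiv.Perm ι => C.map w.toEmbedding = S).card = c := by
    intro S hS
    obtain ⟨σ, hσ⟩ := exists_perm_map C S (Finset.mem_powersetCard.mp hS).2
    symm
    refine Finset.card_equiv (Equiv.mulLeft σ) fun w => ?_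
    simp only [Finset.mem_filter, Finset.mem_univ, true_and, Equiv.coe_mulLeft]
    have : C.map (σ * w).toEmbedding = (C.map w.toEmbedding).map σ.toEmbedding := by
      rw [Finset.map_map]; rfl
    rw [this, ← hσ, (Finset.map_injective _).eq_iff]
  have hcount : (Fintype.card ι).factorial = (Fintype.card ι).choose C.card * c := by
    have h1 := Finset.card_eq_sum_card_fiberwise hmaps
    rw [Finset.sum_congr rfl hc, Finset.card_univ, Fintype.card_perm, Finset.sum_const, Finset.card_powersetCard,
      Finset.card_univ, smul_eq_mul] at h1
    exact h1
  have hle : C.card ≤ Fintype.card ι := Finset.card_le_univ C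
  have hcv : c = C.card.factorial * (Fintype.card ι - C.card).factorial := by
    have h2 := Nat.choose_mul_factorial_mul_factorial hle
    apply Nat.eq_of_mul_eq_mul_left (Nat.choose_pos hle)
    rw [← hcount, ← h2, mul_assoc]
  rw [← hcv, Finset.mul_sum, ← Finset.sum_fiberwise_of_maps_to hmaps]
  refine Finset.sum_congr rfl fun S hS => ?_
  rw [Finset.sum_congr rfl (g := fun _ => F S), Finset.sum_const, hc S hS, nsmul_eq_mul]
  intro w hw
  rw [(Finset.mem_filter.mp hw).2]

variable {N : ℕ}

theorem det_conj (c : ℂ) (u : UG N) :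
    det (1 - c • ((u : Matrix (Fin N) (Fin N) ℂ).map (starRingEnd ℂ))) =
    det (1 - c • ((star u : UG N) : Matrix (Fin N) (Fin N) ℂ)) := by
  rw [← det_transpose]
  congr 1
  ext i j
  simp [Matrix.one_apply, Matrix.star_apply, eq_comm]

theorem det_flip {a : ℂ} (ha : a ≠ 0) (u : UG N) :
    a ^ N * det (1 - a⁻¹ • ((star u : UG N) : Matrix (Fin N) (Fin N) ℂ)) =
    (-1) ^ N * (star (u : Matrix (Fin N) (Fin N) ℂ).det * det (1 - a • (u : Matrix (Fin N) (Fin N) ℂ))) := by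
  have hone : ((star u : UG N) : Matrix (Fin N) (Fin N) ℂ) * (u : Matrix (Fin N) (Fin N) ℂ) = 1 := by
    have h : star u * u = 1 := Unitary.star_mul_self _
    have := congrArg (fun z : UG N => (z : Matrix (Fin N) (Fin N) ℂ)) h
    simpa using this
  have h1 : 1 - a⁻¹ • ((star u : UG N) : Matrix (Fin N) (Fin N) ℂ) =
      (-a⁻¹) • (((star u : UG N) : Matrix (Fin N) (Fin N) ℂ) * (1 - a • (u : Matrix (Fin N) (Fin N) ℂ))) := by
    rw [mul_sub, mul_one, mul_smul_comm, hone, smul_sub, smul_smul, neg_mul, inv_mul_cancel₀ ha]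
    simp; abel
  have h2 : ((star u : UG N) : Matrix (Fin N) (Fin N) ℂ).det = star (u : Matrix (Fin N) (Fin N) ℂ).det := by
    rw [Unitary.coe_star, star_eq_conjTranspose, det_conjTranspose]
  rw [h1, det_smul, det_mul, h2, Fintype.card_fin, ← mul_assoc, ← mul_pow, mul_neg, mul_inv_cancel₀ ha]

theorem final_term {ι : Type*} [Fintype ι] [DecidableEq ι] (a x y : ι → ℂ) (B C : Finset ι) (hBC : B = Cᶜ) (N : ℕ)
    (w : Equiv.Perm ι) :
    ∏ l ∈ C, ((a (w l) * y l) ^ N * ∏ j ∈ B, ((1 - x j / a (w l)) * (1 - y l * a (w j))) /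
      ((1 - a (w j) / a (w l)) * (1 - y l * x j))) =
    (∏ l ∈ C, y l ^ N) * ((-1) ^ N) ^ C.card * WW a x y N Finset.univ B C (C.map w.toEmbedding) := by
  have hsd : Finset.univ \ C.map w.toEmbedding = B.map w.toEmbedding := by
    ext z
    obtain ⟨z', rfl⟩ := w.surjective z
    simp [hBC]
  rw [WW, hsd]
  simp only [Finset.prod_map, Equiv.coe_toEmbedding]
  rw [Finset.prod_mul_distrib]
  simp only [Finset.prod_div_distrib, Finset.prod_mul_distrib, mul_pow, neg_pow (a _)]
  rw [Finset.prod_const]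
  rw [Finset.prod_comm (s := B) (t := C) (f := fun r l => 1 - y l * a (w r)),
    Finset.prod_comm (s := B) (t := C) (f := fun r l => 1 - y l * x r),
    Finset.prod_comm (s := B) (t := C) (f := fun r l => 1 - a (w r) / a (w l))]
  have h1 : (((-1 : ℂ) ^ N) ^ C.card) * (((-1) ^ N) ^ C.card) = 1 := by
    rw [← mul_pow, ← mul_pow]; simp
  rw [mul_div_assoc', mul_div_assoc']
  congr 1
  linear_combination (-(∏ l ∈ C, y l ^ N) * (∏ l ∈ C, a (w l) ^ N) * (∏ l ∈ C, ∏ j ∈ B, (1 - x j / a (w l))) *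
    (∏ l ∈ C, ∏ j ∈ B, (1 - y l * a (w j)))) * h1

theorem final_left (μ : Measure (UG N)) [μ.IsHaarMeasure] [IsProbabilityMeasure μ] (hN : 1 ≤ N)
    {ι : Type*} [Fintype ι] [DecidableEq ι] (a x y : ι → ℂ) (B C : Finset ι) (hBC : B = Cᶜ)
    (ha : ∀ k, a k ≠ 0) (hinj : Function.Injective a)
    (hx : ∀ j ∈ B, ‖x j‖ < 1) (hy : ∀ l ∈ C, ‖y l‖ < 1) :
    ∫ u : UG N, (∏ l ∈ C, (a l * y l) ^ N) *
      (∏ j ∈ B, det (1 - a j • (u : Matrix (Fin N) (Fin N) ℂ)) / det (1 - x j • (u : Matrix (Fin N) (Fin N) ℂ))) *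
      (∏ l ∈ C, det (1 - (a l)⁻¹ • ((u : Matrix (Fin N) (Fin N) ℂ).map (starRingEnd ℂ))) /
        det (1 - y l • ((u : Matrix (Fin N) (Fin N) ℂ).map (starRingEnd ℂ)))) ∂μ =
    (∏ l ∈ C, y l ^ N) * ((-1) ^ N) ^ C.card *
      ∑ S ∈ (Finset.univ : Finset ι).powersetCard C.card, WW a x y N Finset.univ B C S := by
  obtain ⟨n, rfl⟩ : ∃ n, N = n + 1 := ⟨N - 1, by omega⟩
  rw [← main_TD a x y C hy n B hx Finset.univ (fun k _ => ha k) hinj.injOn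
    (by rw [hBC, Finset.card_compl, Finset.card_univ]; have := Finset.card_le_univ C; omega)]
  rw [← szego a x y Finset.univ B C μ hN (fun k _ => ha k) (Finset.card_le_card (Finset.subset_univ _)) hx hy]
  rw [← integral_const_mul]
  refine integral_congr_ae (Filter.Eventually.of_forall fun u => ?_)
  simp only [det_conj, Finset.prod_div_distrib]
  have h1 : (∏ l ∈ C, a l ^ (n + 1)) * ∏ l ∈ C, det (1 - (a l)⁻¹ • ((star u : UG (n + 1)) : Matrix (Fin (n + 1)) (Fin (n + 1)) ℂ)) =
      ((-1) ^ (n + 1)) ^ C.card * (star (u : Matrix (Fin (n + 1)) (Fin (n + 1)) ℂ).det ^ C.card *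
        ∏ l ∈ C, det (1 - a l • (u : Matrix (Fin (n + 1)) (Fin (n + 1)) ℂ))) := by
    rw [← Finset.prod_mul_distrib, Finset.prod_congr rfl (fun l _ => det_flip (ha l) u)]
    rw [Finset.prod_mul_distrib, Finset.prod_mul_distrib, Finset.prod_const, Finset.prod_const]
  have h2 : ∏ k, det (1 - a k • (u : Matrix (Fin (n + 1)) (Fin (n + 1)) ℂ)) =
      (∏ j ∈ B, det (1 - a j • (u : Matrix (Fin (n + 1)) (Fin (n + 1)) ℂ))) *
        ∏ l ∈ C, det (1 - a l • (u : Matrix (Fin (n + 1)) (Fin (n + 1)) ℂ)) := by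
    rw [hBC, mul_comm, Finset.prod_mul_prod_compl]
  rw [h2]
  simp only [mul_pow, Finset.prod_mul_distrib, Finset.prod_inv_distrib, div_eq_mul_inv]
  linear_combination ((∏ l ∈ C, y l ^ (n + 1)) * (∏ j ∈ B, det (1 - a j • (u : Matrix (Fin (n + 1)) (Fin (n + 1)) ℂ))) *
    (∏ j ∈ B, det (1 - x j • (u : Matrix (Fin (n + 1)) (Fin (n + 1)) ℂ)))⁻¹ *
    (∏ l ∈ C, det (1 - y l • ((star u : UG (n + 1)) : Matrix (Fin (n + 1)) (Fin (n + 1)) ℂ)))⁻¹) * h1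

end
end ACR


/-- **Theorem 1.1 (main theorem)**: the Haar-average over `U(N)` of the product of
ratios of characteristic polynomials, with `p` factors involving `u` and `q` conjugate
factors involving `ū`, multiplied by `e^{λ_N}`, equals the supersymmetric Weyl-type
character formula. -/
theorem autocorrelation_ratios_charpoly_unitary
    (N p q : ℕ) (hN : 1 ≤ N) (hp : 1 ≤ p) (hq : 1 ≤ q)
    (ψ φ : Fin (p + q) → ℂ)
    (hφneg : ∀ j : Fin (p + q), (j : ℕ) < p → (φ j).re < 0)
    (hφpos : ∀ l : Fin (p + q), p ≤ (l : ℕ) → 0 < (φ l).re)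
    (hdist : Function.Injective fun k : Fin (p + q) => Complex.exp (Complex.I * ψ k))
    (μ : Measure (Matrix.unitaryGroup (Fin N) ℂ))
    [μ.IsHaarMeasure] [IsProbabilityMeasure μ] :
    (∫ u : Matrix.unitaryGroup (Fin N) ℂ,
      Complex.exp ((N : ℂ) *
          ∑ l ∈ Finset.univ.filter (fun l : Fin (p + q) => p ≤ (l : ℕ)),
            (Complex.I * ψ l - φ l)) *
        (∏ j ∈ Finset.univ.filter (fun j : Fin (p + q) => (j : ℕ) < p),
          Matrix.det (1 - Complex.exp (Complex.I * ψ j) • (u : Matrix (Fin N) (Fin N) ℂ)) /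
            Matrix.det (1 - Complex.exp (φ j) • (u : Matrix (Fin N) (Fin N) ℂ))) *
        (∏ l ∈ Finset.univ.filter (fun l : Fin (p + q) => p ≤ (l : ℕ)),
          Matrix.det (1 - Complex.exp (-(Complex.I * ψ l)) •
              ((u : Matrix (Fin N) (Fin N) ℂ).map (starRingEnd ℂ))) /
            Matrix.det (1 - Complex.exp (-(φ l)) •
              ((u : Matrix (Fin N) (Fin N) ℂ).map (starRingEnd ℂ)))) ∂μ)
    = (1 / ((p.factorial : ℂ) * (q.factorial : ℂ))) *
        ∑ w : Equiv.Perm (Fin (p + q)),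
          ∏ l ∈ Finset.univ.filter (fun l : Fin (p + q) => p ≤ (l : ℕ)),
            (Complex.exp ((N : ℂ) * (Complex.I * ψ (w l) - φ l)) *
              ∏ j ∈ Finset.univ.filter (fun j : Fin (p + q) => (j : ℕ) < p),
                ((1 - Complex.exp (φ j - Complex.I * ψ (w l))) *
                    (1 - Complex.exp (Complex.I * ψ (w j) - φ l))) /
                  ((1 - Complex.exp (Complex.I * ψ (w j) - Complex.I * ψ (w l))) *
                    (1 - Complex.exp (φ j - φ l)))) := by
  let a : Fin (p + q) → ℂ := fun k => Complex.exp (Complex.I * ψ k)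
  let x : Fin (p + q) → ℂ := fun k => Complex.exp (φ k)
  let y : Fin (p + q) → ℂ := fun k => Complex.exp (-(φ k))
  let B : Finset (Fin (p + q)) := Finset.univ.filter (fun j : Fin (p + q) => (j : ℕ) < p)
  let C : Finset (Fin (p + q)) := Finset.univ.filter (fun j : Fin (p + q) => p ≤ (j : ℕ))
  have hBC : B = Cᶜ := by
    ext j; simp [B, C]
  have hBcard : B.card = p := by
    have : B = (Finset.univ : Finset (Fin p)).map (Fin.castAddEmb q) := by
      ext j
      simp only [B, Finset.mem_filter, Finset.mem_univ, true_and, Finset.mem_map]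
      constructor
      · intro h
        exact ⟨⟨j, h⟩, by ext; simp⟩
      · rintro ⟨k, rfl⟩
        simp
    rw [this, Finset.card_map, Finset.card_univ, Fintype.card_fin]
  have hCcard : C.card = q := by
    have h1 := Finset.card_compl C
    rw [← hBC, hBcard, Fintype.card_fin] at h1
    have h2 := Finset.card_le_univ C
    rw [Fintype.card_fin] at h2
    omega
  have ha : ∀ k, a k ≠ 0 := fun k => Complex.exp_ne_zero _
  have hx : ∀ j ∈ B, ‖x j‖ < 1 := by
    intro j hj
    simp only [x, Complex.norm_exp]
    rw [Real.exp_lt_one_iff]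
    exact hφneg j (Finset.mem_filter.mp hj).2
  have hy : ∀ l ∈ C, ‖y l‖ < 1 := by
    intro l hl
    simp only [y, Complex.norm_exp]
    rw [Real.exp_lt_one_iff, Complex.neg_re]
    linarith [hφpos l (Finset.mem_filter.mp hl).2]
  have hL := ACR.final_left μ hN a x y B C hBC ha hdist hx hy
  have e0 : Complex.exp ((N : ℂ) * ∑ l ∈ C, (Complex.I * ψ l - φ l)) = ∏ l ∈ C, (a l * y l) ^ N := by
    rw [Finset.mul_sum, Complex.exp_sum]
    refine Finset.prod_congr rfl fun l _ => ?_
    rw [Complex.exp_nat_mul, sub_eq_add_neg, Complex.exp_add]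
  have e1 : ∀ k, (a k)⁻¹ = Complex.exp (-(Complex.I * ψ k)) := fun k => (Complex.exp_neg _).symm
  have eT : ∀ w : Equiv.Perm (Fin (p + q)), 
      ∏ l ∈ C, (Complex.exp ((N : ℂ) * (Complex.I * ψ (w l) - φ l)) *
              ∏ j ∈ B, ((1 - Complex.exp (φ j - Complex.I * ψ (w l))) *
                    (1 - Complex.exp (Complex.I * ψ (w j) - φ l))) /
                  ((1 - Complex.exp (Complex.I * ψ (w j) - Complex.I * ψ (w l))) *
                    (1 - Complex.exp (φ j - φ l)))) =
      (∏ l ∈ C, y l ^ N) * ((-1) ^ N) ^ C.card * ACR.WW a x y N Finset.univ B C (C.map w.toEmbedding) := by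
    intro w
    rw [← ACR.final_term a x y B C hBC N w]
    refine Finset.prod_congr rfl fun l _ => ?_
    congr 1
    · rw [Complex.exp_nat_mul, sub_eq_add_neg, Complex.exp_add]
    · refine Finset.prod_congr rfl fun j _ => ?_
      have h1 : Complex.exp (φ j - Complex.I * ψ (w l)) = x j / a (w l) := Complex.exp_sub _ _
      have h2 : Complex.exp (Complex.I * ψ (w j) - φ l) = y l * a (w j) := by
        rw [sub_eq_neg_add, Complex.exp_add]
      have h3 : Complex.exp (Complex.I * ψ (w j) - Complex.I * ψ (w l)) = a (w j) / a (w l) := Complex.exp_sub _ _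
      have h4 : Complex.exp (φ j - φ l) = y l * x j := by
        rw [sub_eq_neg_add, Complex.exp_add]
      rw [h1, h2, h3, h4]
  have hR := Finset.sum_congr (rfl : (Finset.univ : Finset (Equiv.Perm (Fin (p + q)))) = Finset.univ) (fun w _ => eT w)
  rw [ACR.perm_sum C (fun S => (∏ l ∈ C, y l ^ N) * ((-1) ^ N) ^ C.card * ACR.WW a x y N Finset.univ B C S),
    hCcard, Fintype.card_fin, Nat.add_sub_cancel, ← Finset.mul_sum] at hR
  rw [hCcard, ← e0] at hL
  simp only [e1] at hL
  refine hL.trans ?_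
  refine Eq.trans ?_ (congrArg (fun z => (1 / ((p.factorial : ℂ) * (q.factorial : ℂ))) * z) hR.symm)
  beta_reduce
  have f1 : (p.factorial : ℂ) ≠ 0 := by exact_mod_cast p.factorial_ne_zero
  have f2 : (q.factorial : ℂ) ≠ 0 := by exact_mod_cast q.factorial_ne_zero
  push_cast
  field_simp
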